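/- arXiv:1607.02334 — 10 statements merged into one kernel-verified Lean document; each statement's English description precedes it below -/
import Mathlib

section
/- For every integer i ≥ 3 there exists a finite tree G of diameter 6i + 4 and a vertex v of G such that for every integer r with 2 ≤ r ≤ i−1, BC_{6r+2}(v) > BC_{6r+3}(v) and BC_{6r+3}(v) < BC_{6r+4}(v). In particular, the profile (BC_2(v), BC_3(v), …, BC_d(v)) of v has at least i−2 dips, and the diameter is Θ(i). -/
open scoped Classical

noncomputable section

/-- `v` is an interior vertex of the (unique, in a tree) shortest `s`–`t` path:
`v ≠ s`, `v ≠ t`, and `dist s v + dist v t = dist s t`. -/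
def IsInterior {V : Type*} (G : SimpleGraph V) (v s t : V) : Prop :=
  v ≠ s ∧ v ≠ t ∧ G.dist s v + G.dist v t = G.dist s t

/-- `Pvtx G k v` : the number of unordered pairs `{s,t}` of vertices with
`2 ≤ dist s t ≤ k` such that `v` is an interior vertex of the `s`–`t` path
(counted as ordered pairs and divided by two). -/
def Pvtx {V : Type*} [Fintype V] (G : SimpleGraph V) (k : ℕ) (v : V) : ℕ :=
  (Finset.univ.filter (fun p : V × V =>
    2 ≤ G.dist p.1 p.2 ∧ G.dist p.1 p.2 ≤ k ∧ IsInterior G v p.1 p.2)).card / 2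

/-- `Ptot G k` : the number of unordered pairs `{s,t}` of vertices with
`2 ≤ dist s t ≤ k` (counted as ordered pairs and divided by two). -/
def Ptot {V : Type*} [Fintype V] (G : SimpleGraph V) (k : ℕ) : ℕ :=
  (Finset.univ.filter (fun p : V × V =>
    2 ≤ G.dist p.1 p.2 ∧ G.dist p.1 p.2 ≤ k)).card / 2

/-- The normalized `k`-betweenness centrality `BC_k(v) = P_k(v) / P_k`. -/
def BC {V : Type*} [Fintype V] (G : SimpleGraph V) (k : ℕ) (v : V) : ℝ :=
  (Pvtx G k v : ℝ) / (Ptot G k : ℝ)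

/-- The diameter of a finite graph: the maximum of `dist s t` over all pairs. -/
def diam {V : Type*} [Fintype V] (G : SimpleGraph V) : ℕ :=
  Finset.univ.sup (fun p : V × V => G.dist p.1 p.2)

end

def hh (p : ℕ × ℕ) : ℕ := if p.2 = 0 then 0 else 1

def dd (p q : ℕ × ℕ) : ℕ :=
  if p = q then 0 else (p.1 - q.1) + (q.1 - p.1) + hh p + hh q

def TT (i m : ℕ) (p : ℕ × ℕ) : Prop :=
  p.1 < 6 * i + 3 ∧ p.2 ≤ m ∧ (p.2 = 0 ∨ p.1 = 0 ∨ p.1 % 6 = 2 ∨ p.1 % 6 = 3)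

structure Model (i m N : ℕ) where
  f : Fin N → ℕ × ℕ
  inj : Function.Injective f
  mem : ∀ s, TT i m (f s)
  surj : ∀ p, TT i m p → ∃ s, f s = p

lemma dd_comm (p q : ℕ × ℕ) : dd p q = dd q p := by
  unfold dd
  by_cases h : p = q
  · simp [h]
  · have : ¬ q = p := fun h' => h h'.symm
    simp only [h, this, if_false]; omega

lemma dd_step (p q r : ℕ × ℕ) (h : dd p q = 1) : dd p r ≤ dd q r + 1 := by
  obtain ⟨a, b⟩ := p
  obtain ⟨c, d⟩ := q
  obtain ⟨e, g⟩ := r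
  simp only [dd, hh, Prod.mk.injEq] at *
  split_ifs at * <;> omega

lemma dd_eq_zero (p q : ℕ × ℕ) (h : dd p q = 0) : p = q := by
  obtain ⟨a, b⟩ := p
  obtain ⟨c, d⟩ := q
  simp only [dd, hh, Prod.mk.injEq] at *
  split_ifs at * <;> omega

lemma dd_next (i m : ℕ) (p q : ℕ × ℕ) (hp : TT i m p) (hq : TT i m q) (h : p ≠ q) :
    ∃ r, TT i m r ∧ dd p r = 1 ∧ dd r q + 1 = dd p q := by
  obtain ⟨a, b⟩ := p
  obtain ⟨c, d⟩ := q
  simp only [TT, ne_eq, Prod.mk.injEq] at *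
  by_cases hb : b = 0
  · by_cases hac : a = c
    · refine ⟨(c, d), hq, ?_⟩
      simp only [dd, hh, Prod.mk.injEq]
      split_ifs <;> omega
    · by_cases hlt : a < c
      · refine ⟨(a+1, 0), ⟨by simp only; omega, by simp, by simp⟩, ?_⟩
        simp only [dd, hh, Prod.mk.injEq]
        split_ifs <;> omega
      · refine ⟨(a-1, 0), ⟨by simp only; omega, by simp, by simp⟩, ?_⟩
        simp only [dd, hh, Prod.mk.injEq]
        split_ifs <;> omega
  · refine ⟨(a, 0), ⟨hp.1, by simp, by simp⟩, ?_⟩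
    simp only [dd, hh, Prod.mk.injEq]
    split_ifs <;> omega

namespace Model

variable {i m N : ℕ} (M : Model i m N)

def G : SimpleGraph (Fin N) where
  Adj s t := dd (M.f s) (M.f t) = 1
  symm := ⟨fun s t h => by rw [dd_comm]; exact h⟩
  loopless := ⟨fun s h => by simp [dd] at h⟩

lemma walk_ge {s t : Fin N} (w : M.G.Walk s t) : dd (M.f s) (M.f t) ≤ w.length := by
  induction w with
  | nil => simp [dd]
  | @cons u v w h p ih =>
    have := dd_step _ _ (M.f w) h
    rw [SimpleGraph.Walk.length_cons]
    exact this.trans (by omega)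

lemma walk_ex (n : ℕ) : ∀ s t : Fin N, dd (M.f s) (M.f t) = n →
    ∃ w : M.G.Walk s t, w.length = n := by
  induction n with
  | zero =>
    intro s t h
    have := M.inj (dd_eq_zero _ _ h)
    subst this
    exact ⟨.nil, rfl⟩
  | succ n ih =>
    intro s t h
    have hne : M.f s ≠ M.f t := by
      intro h'; rw [h'] at h; simp [dd] at h
    obtain ⟨r, hr, h1, h2⟩ := dd_next i m _ _ (M.mem s) (M.mem t) hne
    obtain ⟨u, rfl⟩ := M.surj r hr
    obtain ⟨w, hw⟩ := ih u t (by omega)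
    exact ⟨.cons h1 w, congrArg Nat.succ hw⟩

lemma dist_eq (s t : Fin N) : M.G.dist s t = dd (M.f s) (M.f t) := by
  obtain ⟨w, hw⟩ := M.walk_ex _ s t rfl
  apply le_antisymm
  · rw [← hw]; exact SimpleGraph.dist_le w
  · obtain ⟨w', hw'⟩ := w.reachable.exists_walk_length_eq_dist
    rw [← hw']; exact M.walk_ge w'

lemma preconn : M.G.Preconnected := fun s t => (M.walk_ex _ s t rfl).choose.reachable

lemma isTree : M.G.IsTree := by
  obtain ⟨o, ho⟩ := M.surj (0, 0) ⟨by simp, by simp, by simp⟩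
  have hc : M.G.Connected := { preconnected := M.preconn, nonempty := ⟨o⟩ }
  rw [SimpleGraph.isTree_iff_connected_and_card]
  refine ⟨hc, le_antisymm ?_ hc.card_vert_le_card_edgeSet_add_one⟩
  have hpar : ∀ s : Fin N, ∃ t : Fin N, M.f t =
      (if (M.f s).2 = 0 then ((M.f s).1 - 1, 0) else ((M.f s).1, 0)) := by
    intro s
    apply M.surj
    have := (M.mem s).1
    split_ifs
    · exact ⟨by simp only; omega, by simp, by simp⟩
    · exact ⟨by simp only; omega, by simp, by simp⟩
  choose par hpar using hpar
  have hsub : M.G.edgeFinset ⊆ (Finset.univ.erase o).image (fun s => s(s, par s)) := by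
    intro e he
    rw [SimpleGraph.mem_edgeFinset] at he
    induction e with
    | h s t =>
      have h : dd (M.f s) (M.f t) = 1 := he
      have key : (s ≠ o ∧ par s = t) ∨ (t ≠ o ∧ par t = s) := by
        have e1 : s ≠ o ↔ M.f s ≠ (0,0) := by rw [← ho, M.inj.ne_iff]
        have e2 : t ≠ o ↔ M.f t ≠ (0,0) := by rw [← ho, M.inj.ne_iff]
        rw [e1, e2, ← M.inj.eq_iff, ← M.inj.eq_iff, hpar, hpar]
        clear e1 e2 he hpar
        generalize M.f s = p at *
        generalize M.f t = q at *
        obtain ⟨a, b⟩ := p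
        obtain ⟨c, d⟩ := q
        simp only [dd, hh, Prod.mk.injEq, ne_eq] at *
        split_ifs at * <;> simp only [Prod.mk.injEq] <;> omega
      rw [Finset.mem_image]
      rcases key with ⟨h1, h2⟩ | ⟨h1, h2⟩
      · exact ⟨s, by simpa using h1, by rw [h2]⟩
      · exact ⟨t, by simpa using h1, by rw [h2, Sym2.eq_swap]⟩
  have h1 := (Finset.card_le_card hsub).trans Finset.card_image_le
  rw [Finset.card_erase_of_mem (Finset.mem_univ _), Finset.card_univ] at h1
  have : 0 < Fintype.card (Fin N) := Fintype.card_pos_iff.mpr ⟨o⟩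
  rw [Nat.card_eq_fintype_card, Nat.card_eq_fintype_card, ← SimpleGraph.edgeFinset_card]
  omega

lemma diam_eq (hm : 1 ≤ m) : diam M.G = 6 * i + 4 := by
  unfold diam
  apply le_antisymm
  · apply Finset.sup_le
    rintro ⟨s, t⟩ -
    simp only
    rw [M.dist_eq]
    have h1 := (M.mem s).1
    have h2 := (M.mem t).1
    simp only [dd, hh]
    split_ifs <;> omega
  · obtain ⟨s, hs⟩ := M.surj (0, 1) ⟨by simp, hm, by simp⟩
    obtain ⟨t, ht⟩ := M.surj (6*i+2, 1) ⟨by simp, hm, by simp only; omega⟩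
    have : M.G.dist s t = 6 * i + 4 := by
      rw [M.dist_eq, hs, ht]; simp [dd, hh]
    rw [← this]
    exact Finset.le_sup (f := fun p : Fin N × Fin N => M.G.dist p.1 p.2) (Finset.mem_univ (s, t))

end Model

lemma even_card {V : Type*} [Fintype V] (P : V × V → Prop) {_ : DecidablePred P} (hs : ∀ p, P p → P p.swap)
    (hd : ∀ v, ¬ P (v, v)) : Even (Finset.univ.filter P).card := by
  rw [← ZMod.natCast_eq_zero_iff_even, Finset.card_eq_sum_ones, Nat.cast_sum]
  refine Finset.sum_involution (fun p _ => p.swap) ?_ ?_ ?_ ?_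
  · intro p hp; decide
  · rintro ⟨a, b⟩ hp - h
    simp only [Prod.swap, Prod.mk.injEq] at h
    obtain ⟨h, -⟩ := h
    subst h
    exact hd _ (by simpa using hp)
  · intro p hp; simp at hp ⊢; exact hs _ hp
  · intro p hp; simp

/-- ordered through pairs -/
noncomputable def thr {V : Type*} [Fintype V] (G : SimpleGraph V) (v : V) (Q : ℕ → Prop) : ℕ :=
  (Finset.univ.filter (fun p : V × V => (2 ≤ G.dist p.1 p.2 ∧ Q (G.dist p.1 p.2)) ∧
    IsInterior G v p.1 p.2)).card

noncomputable def non {V : Type*} [Fintype V] (G : SimpleGraph V) (v : V) (Q : ℕ → Prop) : ℕ :=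
  (Finset.univ.filter (fun p : V × V => (2 ≤ G.dist p.1 p.2 ∧ Q (G.dist p.1 p.2)) ∧
    ¬ IsInterior G v p.1 p.2)).card

lemma card_split {V : Type*} [Fintype V] (P Q R : V → Prop) {_ : DecidablePred P} {_ : DecidablePred Q}
    {_ : DecidablePred R} (h : ∀ p, P p ↔ Q p ∨ R p) (hd : ∀ p, Q p → ¬ R p) :
    (Finset.univ.filter P).card = (Finset.univ.filter Q).card + (Finset.univ.filter R).card := by
  rw [← Finset.card_union_of_disjoint]
  · congr 1
    ext p
    simp [h]
  · rw [Finset.disjoint_filter]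
    intro p _
    exact hd p

lemma BC_eq {V : Type*} [Fintype V] (G : SimpleGraph V) (k : ℕ) (v : V) :
    BC G k v = (thr G v (· ≤ k) : ℝ) / ((thr G v (· ≤ k) : ℝ) + non G v (· ≤ k)) := by
  unfold BC
  have h1 : 2 * Pvtx G k v = thr G v (· ≤ k) := by
    unfold Pvtx thr
    simp only [← and_assoc]
    apply Nat.mul_div_cancel' (Even.two_dvd _)
    apply even_card
    · rintro ⟨s, t⟩ h
      simp only [IsInterior, Prod.swap] at h ⊢
      rw [G.dist_comm (u := t) (v := s), G.dist_comm (u := t) (v := v),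
        G.dist_comm (u := v) (v := s)]
      refine ⟨h.1, h.2.2.1, h.2.1, ?_⟩
      have := h.2.2.2
      omega
    · intro v h; simp at h
  have h2 : 2 * Ptot G k = thr G v (· ≤ k) + non G v (· ≤ k) := by
    unfold Ptot thr non
    rw [← card_split (fun p : V × V => 2 ≤ G.dist p.1 p.2 ∧ G.dist p.1 p.2 ≤ k) _ _
      (fun p => by tauto) (fun p => by tauto)]
    apply Nat.mul_div_cancel' (Even.two_dvd _)
    apply even_card
    · rintro ⟨s, t⟩ h
      simp only [Prod.swap] at h ⊢
      rwa [G.dist_comm (u := t) (v := s)]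
    · intro v h; simp at h
  have h1' : (2:ℝ) * Pvtx G k v = thr G v (· ≤ k) := by exact_mod_cast h1
  have h2' : (2:ℝ) * Ptot G k = thr G v (· ≤ k) + non G v (· ≤ k) := by exact_mod_cast h2
  rw [← h2', ← h1', mul_div_mul_left _ _ two_ne_zero]

lemma thr_succ {V : Type*} [Fintype V] (G : SimpleGraph V) (k : ℕ) (v : V) :
    thr G v (· ≤ k + 1) = thr G v (· ≤ k) + thr G v (· = k + 1) := by
  unfold thr
  apply card_split
  · intro p
    by_cases h : IsInterior G v p.1 p.2 <;>
      simp only [h, and_true, and_false, or_self, not_true, not_false_eq_true] ; omega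
  · intro p h1 h2
    omega

lemma non_succ {V : Type*} [Fintype V] (G : SimpleGraph V) (k : ℕ) (v : V) :
    non G v (· ≤ k + 1) = non G v (· ≤ k) + non G v (· = k + 1) := by
  unfold non
  apply card_split
  · intro p
    by_cases h : IsInterior G v p.1 p.2 <;>
      simp only [h, and_true, and_false, or_self, not_true, not_false_eq_true] ; omega
  · intro p h1 h2
    omega

lemma num_bound (L m a b A B : ℕ) (hm : m = 16 * L ^ 4 + 1)
    (hA : A ≤ 2 * L ^ 2 * (m + 1)) (ha : a ≤ (L * (m + 1)) ^ 2) (hb : m ^ 2 ≤ b)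
    (hB : m ^ 2 ≤ B) : A * a < B * b := by
  have h1 : A * a ≤ (2 * L ^ 2 * (m + 1)) * (L * (m + 1)) ^ 2 := Nat.mul_le_mul hA ha
  have h2 : m ^ 2 * m ^ 2 ≤ B * b := Nat.mul_le_mul hB hb
  have h3 : (2 * L ^ 2 * (m + 1)) * (L * (m + 1)) ^ 2 = 2 * L ^ 4 * (m + 1) ^ 3 := by ring
  have h4 : (m + 1) ^ 3 ≤ (2 * m) ^ 3 := Nat.pow_le_pow_left (by omega) 3
  have h5 : 2 * L ^ 4 * (m + 1) ^ 3 ≤ 2 * L ^ 4 * (2 * m) ^ 3 := Nat.mul_le_mul_left _ h4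
  have h6 : 2 * L ^ 4 * (2 * m) ^ 3 = (16 * L ^ 4) * m ^ 3 := by ring
  have h7 : (16 * L ^ 4) * m ^ 3 < m * m ^ 3 := by
    apply Nat.mul_lt_mul_of_pos_right
    · omega
    · exact Nat.pow_pos (by omega)
  have h8 : m * m ^ 3 = m ^ 2 * m ^ 2 := by ring
  omega

namespace Model

variable {i m N : ℕ} (M : Model i m N)

include M in
lemma N_le : N ≤ (6 * i + 3) * (m + 1) := by
  have : (Finset.univ.image M.f) ⊆ Finset.range (6*i+3) ×ˢ Finset.range (m+1) := by
    intro p hp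
    simp only [Finset.mem_image, Finset.mem_univ, true_and] at hp
    obtain ⟨s, rfl⟩ := hp
    have := M.mem s
    simp only [Finset.mem_product, Finset.mem_range]
    exact ⟨this.1, Nat.lt_succ_of_le this.2.1⟩
  have h := Finset.card_le_card this
  rw [Finset.card_image_of_injective _ M.inj] at h
  simpa using h

include M in
lemma triv_le (P : Fin N × Fin N → Prop) {_ : DecidablePred P} :
    (Finset.univ.filter P).card ≤ ((6 * i + 3) * (m + 1)) ^ 2 := by
  have h := Finset.card_filter_le Finset.univ P
  simp only [Finset.card_univ, Fintype.card_prod, Fintype.card_fin] at h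
  have := Nat.mul_le_mul M.N_le M.N_le
  rw [sq]; omega

lemma small_le (P : Fin N × Fin N → Prop) {_ : DecidablePred P}
    (hP : ∀ p, P p → (M.f p.1).2 = 0 ∨ (M.f p.2).2 = 0) :
    (Finset.univ.filter P).card ≤ 2 * (6 * i + 3) ^ 2 * (m + 1) := by
  set Z : Finset (Fin N) := Finset.univ.filter (fun s => (M.f s).2 = 0) with hZ
  have hZc : Z.card ≤ 6 * i + 3 := by
    rw [← Finset.card_range (6*i+3)]
    apply Finset.card_le_card_of_injOn (fun s => (M.f s).1)
    · intro s hs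
      simpa using (M.mem s).1
    · intro s hs t ht h
      simp only [hZ, Finset.coe_filter, Finset.mem_univ, true_and, Set.mem_ofPred_eq] at hs ht
      exact M.inj (Prod.ext h (hs.trans ht.symm))
  have hsub : Finset.univ.filter P ⊆ Z ×ˢ Finset.univ ∪ Finset.univ ×ˢ Z := by
    intro p hp
    simp only [Finset.mem_filter, Finset.mem_univ, true_and] at hp
    simpa [hZ] using hP p hp
  have h1 := (Finset.card_le_card hsub).trans (Finset.card_union_le _ _)
  simp only [Finset.card_product, Finset.card_univ, Fintype.card_fin] at h1
  have h2 : Z.card * N ≤ (6 * i + 3) * ((6 * i + 3) * (m + 1)) := Nat.mul_le_mul hZc M.N_le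
  have h3 : N * Z.card = Z.card * N := Nat.mul_comm _ _
  have h4 : 2 * (6 * i + 3) ^ 2 * (m + 1) = 2 * ((6 * i + 3) * ((6 * i + 3) * (m + 1))) := by ring
  omega

lemma large_ge (P : Fin N × Fin N → Prop) {_ : DecidablePred P} (x y : ℕ)
    (hx : x < 6 * i + 3 ∧ (x = 0 ∨ x % 6 = 2 ∨ x % 6 = 3))
    (hy : y < 6 * i + 3 ∧ (y = 0 ∨ y % 6 = 2 ∨ y % 6 = 3))
    (hP : ∀ s t j l, M.f s = (x, j + 1) → M.f t = (y, l + 1) → P (s, t)) :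
    m ^ 2 ≤ (Finset.univ.filter P).card := by
  have e1 : ∀ j : Fin m, ∃ s, M.f s = (x, j.1 + 1) := fun j =>
    M.surj _ ⟨hx.1, j.2, Or.inr hx.2⟩
  have e2 : ∀ j : Fin m, ∃ s, M.f s = (y, j.1 + 1) := fun j =>
    M.surj _ ⟨hy.1, j.2, Or.inr hy.2⟩
  choose g1 hg1 using e1
  choose g2 hg2 using e2
  have : m ^ 2 = (Finset.univ : Finset (Fin m × Fin m)).card := by simp [sq]
  rw [this]
  apply Finset.card_le_card_of_injOn (fun q => (g1 q.1, g2 q.2))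
  · intro q _
    simpa using hP _ _ _ _ (hg1 q.1) (hg2 q.2)
  · rintro ⟨a, b⟩ _ ⟨c, d⟩ _ h
    simp only [Prod.mk.injEq] at h
    have h1 := hg1 a
    have h2 := hg2 b
    rw [h.1, hg1] at h1
    rw [h.2, hg2] at h2
    simp only [Prod.mk.injEq, true_and, Nat.add_right_cancel_iff] at h1 h2
    exact Prod.ext (Fin.ext h1.symm) (Fin.ext h2.symm)

lemma int_iff {v : Fin N} (hv : M.f v = (1, 0)) (s t : Fin N) :
    IsInterior M.G v s t ↔ (M.f s ≠ (1,0) ∧ M.f t ≠ (1,0) ∧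
      dd (M.f s) (1,0) + dd (1,0) (M.f t) = dd (M.f s) (M.f t)) := by
  unfold IsInterior
  rw [M.dist_eq, M.dist_eq, M.dist_eq, hv, ← hv, M.inj.ne_iff, M.inj.ne_iff, hv,
    ne_comm (a := v), ne_comm (a := v)]

end Model

/-- For any `i ≥ 3` there is a tree of diameter `6i + 4` and a vertex `v` whose
profile has a dip at `6r + 3` for every `2 ≤ r ≤ i - 1` (hence at least `i - 2` dips,
while the diameter is `Θ(i)`). -/
theorem exists_tree_with_many_dips (i : ℕ) (hi : 3 ≤ i) :
    ∃ (N : ℕ) (G : SimpleGraph (Fin N)) (v : Fin N), G.IsTree ∧ diam G = 6 * i + 4 ∧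
      ∀ r : ℕ, 2 ≤ r → r ≤ i - 1 →
        BC G (6*r+2) v > BC G (6*r+3) v ∧ BC G (6*r+3) v < BC G (6*r+4) v := by
  obtain ⟨m, hm⟩ : ∃ m, m = 16 * (6 * i + 3) ^ 4 + 1 := ⟨_, rfl⟩
  have hfin : {p | TT i m p}.Finite := by
    apply Set.Finite.subset (Finset.range (6*i+3) ×ˢ Finset.range (m+1)).finite_toSet
    intro p hp
    simp only [Finset.coe_product, Set.mem_prod, Finset.coe_range, Set.mem_Iio]
    exact ⟨hp.1, Nat.lt_succ_of_le hp.2.1⟩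
  have : Fintype {p | TT i m p} := hfin.fintype
  let e := (Fintype.equivFin {p | TT i m p}).symm
  let M : Model i m (Fintype.card {p | TT i m p}) :=
    { f := fun s => (e s).1
      inj := Subtype.val_injective.comp e.injective
      mem := fun s => (e s).2
      surj := fun p hp => ⟨e.symm ⟨p, hp⟩, by simp⟩ }
  clear_value M
  obtain ⟨v, hv⟩ := M.surj (1, 0) ⟨by simp, by simp, by simp⟩
  refine ⟨_, M.G, v, M.isTree, M.diam_eq (by omega), ?_⟩
  intro r hr hri
  have hA : thr M.G v (· = 6*r+2+1) ≤ 2 * (6 * i + 3) ^ 2 * (m + 1) := by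
    apply M.small_le
    rintro ⟨s, t⟩ h
    simp only [M.int_iff hv, M.dist_eq] at h ⊢
    have h1 := M.mem s
    have h2 := M.mem t
    generalize M.f s = p at *
    generalize M.f t = q at *
    obtain ⟨a, b⟩ := p
    obtain ⟨c, d⟩ := q
    simp only [dd, hh, Prod.mk.injEq, ne_eq, TT] at *
    split_ifs at * <;> omega
  have hD : non M.G v (· = 6*r+3+1) ≤ 2 * (6 * i + 3) ^ 2 * (m + 1) := by
    apply M.small_le
    rintro ⟨s, t⟩ h
    simp only [M.int_iff hv, M.dist_eq] at h ⊢
    have h1 := M.mem s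
    have h2 := M.mem t
    generalize M.f s = p at *
    generalize M.f t = q at *
    obtain ⟨a, b⟩ := p
    obtain ⟨c, d⟩ := q
    simp only [dd, hh, Prod.mk.injEq, ne_eq, TT] at *
    split_ifs at * <;> omega
  have l1 : m ^ 2 ≤ thr M.G v (· ≤ 6*r+2) := by
    apply M.large_ge _ 0 2 (by omega) (by omega)
    intro s t j l hs ht
    simp only [M.int_iff hv, M.dist_eq, hs, ht, dd, hh, Prod.mk.injEq, ne_eq]
    simp; omega
  have l2 : m ^ 2 ≤ non M.G v (· = 6*r+2+1) := by
    apply M.large_ge _ 2 (6*r+3) (by omega) (by omega)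
    intro s t j l hs ht
    simp only [M.int_iff hv, M.dist_eq, hs, ht, dd, hh, Prod.mk.injEq, ne_eq]
    simp
  have l3 : m ^ 2 ≤ thr M.G v (· = 6*r+3+1) := by
    apply M.large_ge _ 0 (6*r+2) (by omega) (by omega)
    intro s t j l hs ht
    simp only [M.int_iff hv, M.dist_eq, hs, ht, dd, hh, Prod.mk.injEq, ne_eq]
    simp; omega
  have u1 : non M.G v (· ≤ 6*r+2) ≤ ((6 * i + 3) * (m + 1)) ^ 2 := M.triv_le _
  have u2 : thr M.G v (· ≤ 6*r+3) ≤ ((6 * i + 3) * (m + 1)) ^ 2 := M.triv_le _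
  have s1 := thr_succ M.G (6*r+2) v
  have s2 := non_succ M.G (6*r+2) v
  have s3 := thr_succ M.G (6*r+3) v
  have s4 := non_succ M.G (6*r+3) v
  simp only [show 6*r+2+1 = 6*r+3 by ring, show 6*r+3+1 = 6*r+4 by ring] at *
  have k1 := num_bound _ m _ _ _ _ hm hA u1 l1 l2
  have k2 := num_bound _ m _ _ _ _ hm hD u2 (s2 ▸ l2.trans (Nat.le_add_left _ _)) l3
  have hmp : 0 < m ^ 2 := Nat.pow_pos (by omega)
  simp only [BC_eq, gt_iff_lt]
  generalize thr M.G v (· ≤ 6*r+2) = a0 at *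
  generalize thr M.G v (· ≤ 6*r+3) = a1 at *
  generalize thr M.G v (· ≤ 6*r+4) = a2 at *
  generalize non M.G v (· ≤ 6*r+2) = n0 at *
  generalize non M.G v (· ≤ 6*r+3) = n1 at *
  generalize non M.G v (· ≤ 6*r+4) = n2 at *
  generalize thr M.G v (· = 6*r+3) = A at *
  generalize thr M.G v (· = 6*r+4) = A' at *
  generalize non M.G v (· = 6*r+3) = B at *
  generalize non M.G v (· = 6*r+4) = B' at *
  have p0 : (0:ℝ) < (a0:ℝ) + n0 := by exact_mod_cast (by omega : 0 < a0 + n0)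
  have p1 : (0:ℝ) < (a1:ℝ) + n1 := by exact_mod_cast (by omega : 0 < a1 + n1)
  have p2 : (0:ℝ) < (a2:ℝ) + n2 := by exact_mod_cast (by omega : 0 < a2 + n2)
  rw [div_lt_div_iff₀ p1 p0, div_lt_div_iff₀ p1 p2]
  constructor
  · norm_cast
    subst s1 s2
    nlinarith
  · norm_cast
    subst s3 s4
    nlinarith
end

section
/- For every integer ℓ ≥ 2 there exists a finite tree T of diameter at most 6ℓ and vertices u, v of T such that for every integer i with 1 ≤ i ≤ ℓ−1, BC_{2i}(u) > BC_{2i}(v) and BC_{2i+1}(v) > BC_{2i+1}(u). In particular, the profiles of u and v cross Ω(ℓ) times while the diameter of T is Θ(ℓ). -/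
open scoped Classical

namespace ManyCross

def gr {N : ℕ} (D : Fin N → Fin N → ℕ) (h0 : ∀ s t, D s t = 0 ↔ s = t)
    (hs : ∀ s t, D s t = D t s) : SimpleGraph (Fin N) where
  Adj s t := D s t = 1
  symm := ⟨fun s t h => by rw [hs]; exact h⟩
  loopless := ⟨fun s h => by
    have := (h0 s s).2 rfl
    omega⟩

lemma gr_walk {N : ℕ} (D : Fin N → Fin N → ℕ) (h0 : ∀ s t, D s t = 0 ↔ s = t)
    (hs : ∀ s t, D s t = D t s)
    (hstep : ∀ s t n, D s t = n + 1 → ∃ w, D s w = 1 ∧ D w t = n) (n : ℕ) :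
    ∀ s t, D s t = n → ∃ p : (gr D h0 hs).Walk s t, p.length = n := by
  induction n with
  | zero =>
    intro s t h
    have := (h0 s t).1 h
    subst this
    exact ⟨SimpleGraph.Walk.nil, rfl⟩
  | succ n ih =>
    intro s t h
    obtain ⟨w, h1, h2⟩ := hstep s t n h
    obtain ⟨p, hp⟩ := ih w t h2
    have ha : (gr D h0 hs).Adj s w := h1
    exact ⟨SimpleGraph.Walk.cons ha p, by simp [hp]⟩

lemma gr_dist {N : ℕ} (D : Fin N → Fin N → ℕ) (h0 : ∀ s t, D s t = 0 ↔ s = t)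
    (hs : ∀ s t, D s t = D t s) (htri : ∀ s w t, D s t ≤ D s w + D w t)
    (hstep : ∀ s t n, D s t = n + 1 → ∃ w, D s w = 1 ∧ D w t = n) (s t : Fin N) :
    (gr D h0 hs).dist s t = D s t := by
  obtain ⟨p, hp⟩ := gr_walk D h0 hs hstep _ s t rfl
  apply le_antisymm
  · rw [← hp]; exact SimpleGraph.dist_le p
  · have hr : (gr D h0 hs).Reachable s t := ⟨p⟩
    obtain ⟨q, hq⟩ := hr.exists_walk_length_eq_dist
    rw [← hq]
    clear hq hp p hr
    induction q with
    | nil => exact ((h0 _ _).2 rfl).le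
    | @cons a b c hab q ih =>
      have h1 : D a b = 1 := hab
      have := htri a b c
      simp only [SimpleGraph.Walk.length_cons]
      omega

def pos (K n : ℕ) : ℤ :=
  if n = 0 then 0 else if n = 1 then 1 else if n = 2 then 0
  else if n < 3 + 4 * K then
    -(2 * (((n - 3) / 4 : ℕ) : ℤ) + (if (n - 3) % 4 = 0 then 1 else 2))
  else 1 + 2 * (((n - 3 - 4 * K) / 8 : ℕ) : ℤ) + (if (n - 3 - 4 * K) % 8 = 1 then 2 else 1)

def lf (K n : ℕ) : ℕ :=
  if n = 0 then 0 else if n = 1 then 0 else if n = 2 then 1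
  else if n < 3 + 4 * K then (if (n - 3) % 4 < 2 then 0 else 1)
  else (if (n - 3 - 4 * K) % 8 < 2 then 0 else 1)

def sp (K : ℕ) (p : ℤ) : ℕ :=
  if p = 0 then 0 else if p = 1 then 1
  else if p < 0 then 3 + 4 * (((-p).toNat - 1) / 2) + ((-p).toNat - 1) % 2
  else 3 + 4 * K + 8 * ((p.toNat - 2) / 2) + (p.toNat - 2) % 2

lemma lf_le (K n : ℕ) : lf K n ≤ 1 := by unfold lf; split_ifs <;> omega

lemma pos_bd (K n : ℕ) (h : n < 3 + 12 * K) : -(2 * K : ℤ) ≤ pos K n ∧ pos K n ≤ 2 * K + 1 := by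
  unfold pos; split_ifs <;> omega

lemma sp_lt (K : ℕ) (p : ℤ) (h1 : -(2 * K : ℤ) ≤ p) (h2 : p ≤ 2 * K + 1) :
    sp K p < 3 + 12 * K := by
  unfold sp; split_ifs <;> omega

lemma lf_sp (K : ℕ) (p : ℤ) (h1 : -(2 * K : ℤ) ≤ p) (h2 : p ≤ 2 * K + 1) :
    lf K (sp K p) = 0 := by
  unfold sp lf; split_ifs <;> omega

lemma pos_sp (K : ℕ) (p : ℤ) (h1 : -(2 * K : ℤ) ≤ p) (h2 : p ≤ 2 * K + 1) :
    pos K (sp K p) = p := by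
  unfold sp
  split_ifs with h h' h''
  · subst h; simp [pos]
  · subst h'; simp [pos]
  · unfold pos; split_ifs <;> omega
  · unfold pos; split_ifs <;> omega

lemma sp_pos (K n : ℕ) (h : lf K n = 0) : sp K (pos K n) = n := by
  unfold lf at h
  unfold pos
  split_ifs at h ⊢ <;> (unfold sp; split_ifs <;> omega)

lemma pos_zero (K n : ℕ) : pos K n = 0 ↔ (n = 0 ∨ n = 2) := by
  unfold pos; split_ifs <;> omega

lemma pos_one (K n : ℕ) : pos K n = 1 ↔ n = 1 := by
  unfold pos; split_ifs <;> omega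

lemma depth_u_odd (K n j : ℕ) (hj : j < K) (h : n < 3 + 12 * K) :
    (pos K n < 0 ∧ - pos K n + lf K n ≤ 2 * j + 1) ↔ (3 ≤ n ∧ n < 3 + (4 * j + 1)) := by
  unfold pos lf; split_ifs <;> omega

lemma depth_u_even (K n j : ℕ) (hj : j < K) (h : n < 3 + 12 * K) :
    (pos K n < 0 ∧ - pos K n + lf K n ≤ 2 * j + 2) ↔ (3 ≤ n ∧ n < 3 + (4 * j + 2)) := by
  unfold pos lf; split_ifs <;> omega

lemma depth_v_odd (K n j : ℕ) (hj : j < K) (h : n < 3 + 12 * K) :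
    (1 < pos K n ∧ pos K n - 1 + lf K n ≤ 2 * j + 1) ↔
      (3 + 4 * K ≤ n ∧ n < 3 + 4 * K + (8 * j + 1)) := by
  unfold pos lf; split_ifs <;> omega

lemma depth_v_even (K n j : ℕ) (hj : j < K) (h : n < 3 + 12 * K) :
    (1 < pos K n ∧ pos K n - 1 + lf K n ≤ 2 * j + 2) ↔
      (3 + 4 * K ≤ n ∧ n < 3 + 4 * K + (8 * j + 8)) := by
  unfold pos lf; split_ifs <;> omega

def D (K : ℕ) (s t : Fin (3 + 12 * K)) : ℕ :=
  if s = t then 0 else (pos K s - pos K t).natAbs + lf K s + lf K t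

def spf (K : ℕ) (p : ℤ) (h1 : -(2 * K : ℤ) ≤ p) (h2 : p ≤ 2 * K + 1) : Fin (3 + 12 * K) :=
  ⟨sp K p, sp_lt K p h1 h2⟩

lemma spine_inj (K : ℕ) (s t : Fin (3 + 12 * K)) (hs : lf K s = 0) (ht : lf K t = 0)
    (h : pos K s = pos K t) : s = t := by
  apply Fin.ext
  rw [← sp_pos K s hs, ← sp_pos K t ht, h]

lemma D0 (K : ℕ) (s t : Fin (3 + 12 * K)) : D K s t = 0 ↔ s = t := by
  unfold D
  split_ifs with h
  · simp [h]
  · simp only [h, iff_false]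
    intro h'
    exact h (spine_inj K s t (by omega) (by omega) (by omega))

lemma Dsymm (K : ℕ) (s t : Fin (3 + 12 * K)) : D K s t = D K t s := by
  unfold D
  by_cases h : s = t
  · simp [h]
  · rw [if_neg h, if_neg (Ne.symm h)]; omega

lemma Dtri (K : ℕ) (s w t : Fin (3 + 12 * K)) : D K s t ≤ D K s w + D K w t := by
  unfold D
  split_ifs <;> first | omega | (subst_vars; first | omega | contradiction)

lemma Dsp (K : ℕ) (p : ℤ) (h1 : -(2 * K : ℤ) ≤ p) (h2 : p ≤ 2 * K + 1) (t : Fin (3 + 12 * K)) :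
    D K (spf K p h1 h2) t = (p - pos K t).natAbs + lf K t := by
  have hl := lf_sp K p h1 h2
  have hp := pos_sp K p h1 h2
  unfold D
  split_ifs with h
  · subst h
    simp [spf, hl, hp]
  · simp [spf, hl, hp]

lemma Dstep (K : ℕ) (s t : Fin (3 + 12 * K)) (n : ℕ) (h : D K s t = n + 1) :
    ∃ w, D K s w = 1 ∧ D K w t = n := by
  have hne : s ≠ t := by
    intro h'
    have := (D0 K s t).2 h'
    omega
  have hb := pos_bd K s s.2
  have hbt := pos_bd K t t.2
  have e : D K s t = (pos K s - pos K t).natAbs + lf K s + lf K t := by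
    unfold D; rw [if_neg hne]
  have l1 := lf_le K s
  have l2 := lf_le K t
  by_cases hl : lf K s = 1
  · refine ⟨spf K (pos K s) hb.1 hb.2, ?_, ?_⟩
    · rw [Dsymm, Dsp]; omega
    · rw [Dsp]; omega
  · by_cases hp : pos K s = pos K t
    · have : lf K t ≠ 0 := fun h' => hne (spine_inj K s t (by omega) h' hp)
      refine ⟨t, by omega, ?_⟩
      rw [(D0 K t t).2 rfl]; omega
    · by_cases hlt : pos K s < pos K t
      · refine ⟨spf K (pos K s + 1) (by omega) (by omega), ?_, ?_⟩
        · rw [Dsymm, Dsp]; omega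
        · rw [Dsp]; omega
      · refine ⟨spf K (pos K s - 1) (by omega) (by omega), ?_, ?_⟩
        · rw [Dsymm, Dsp]; omega
        · rw [Dsp]; omega

def T (K : ℕ) : SimpleGraph (Fin (3 + 12 * K)) := gr (D K) (D0 K) (Dsymm K)

lemma T_dist (K : ℕ) (s t) : (T K).dist s t = D K s t :=
  gr_dist _ _ _ (Dtri K) (Dstep K) s t

lemma T_conn (K : ℕ) : (T K).Connected := by
  haveI : Nonempty (Fin (3 + 12 * K)) := ⟨⟨0, by omega⟩⟩
  refine SimpleGraph.Connected.mk ?_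
  intro s t
  obtain ⟨p, _⟩ := gr_walk (D K) (D0 K) (Dsymm K) (Dstep K) _ s t rfl
  exact ⟨p⟩

def top (K : ℕ) : Fin (3 + 12 * K) := spf K (2 * K + 1) (by omega) (by omega)

def par (K : ℕ) (s : Fin (3 + 12 * K)) : Fin (3 + 12 * K) :=
  if h : lf K s = 1 then spf K (pos K s) (pos_bd K s s.2).1 (pos_bd K s s.2).2
  else if h2 : pos K s < 2 * K + 1 then
    spf K (pos K s + 1) (by have := pos_bd K s s.2; omega) (by omega)
  else s

lemma eq_spf (K : ℕ) (t : Fin (3 + 12 * K)) (p : ℤ) (h1 h2) (hl : lf K t = 0) (hp : pos K t = p) :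
    t = spf K p h1 h2 := by
  subst hp
  apply Fin.ext
  simp [spf, sp_pos K t hl]

lemma top_pos (K : ℕ) : pos K (top K) = 2 * K + 1 := by
  have := pos_sp K (2 * K + 1) (by omega) (by omega)
  exact this
lemma top_lf (K : ℕ) : lf K (top K) = 0 := by
  have := lf_sp K (2 * K + 1) (by omega) (by omega)
  exact this

lemma par_of_adj (K : ℕ) (s t : Fin (3 + 12 * K)) (h : D K s t = 1) :
    (s ≠ top K ∧ t = par K s) ∨ (t ≠ top K ∧ s = par K t) := by
  have hne : s ≠ t := by
    intro h'
    have := (D0 K s t).2 h'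
    omega
  have e : D K s t = (pos K s - pos K t).natAbs + lf K s + lf K t := by
    unfold D; rw [if_neg hne]
  have b1 := pos_bd K s s.2
  have b2 := pos_bd K t t.2
  have tp := top_pos K
  have tl := top_lf K
  by_cases hl : lf K s = 1
  · left
    refine ⟨by rintro rfl; omega, ?_⟩
    unfold par
    rw [dif_pos hl]
    exact eq_spf K t _ _ _ (by omega) (by omega)
  · by_cases hl' : lf K t = 1
    · right
      refine ⟨by rintro rfl; omega, ?_⟩
      unfold par
      rw [dif_pos hl']
      exact eq_spf K s _ _ _ (by omega) (by omega)
    · by_cases hlt : pos K s < pos K t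
      · left
        refine ⟨by rintro rfl; omega, ?_⟩
        unfold par
        rw [dif_neg hl, dif_pos (by omega)]
        exact eq_spf K t _ _ _ (by omega) (by omega)
      · right
        refine ⟨by rintro rfl; omega, ?_⟩
        unfold par
        rw [dif_neg hl', dif_pos (by omega)]
        exact eq_spf K s _ _ _ (by omega) (by omega)

lemma T_tree (K : ℕ) : (T K).IsTree := by
  rw [SimpleGraph.isTree_iff_connected_and_card]
  refine ⟨T_conn K, le_antisymm ?_ ?_⟩
  · have hsub : (T K).edgeSet ⊆
        (((Finset.univ.erase (top K)).image (fun s => s(s, par K s)) : Finset _) : Set _) := by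
      intro e he
      induction e using Sym2.ind with
      | _ s t =>
        have h : D K s t = 1 := he
        simp only [Finset.coe_image, Set.mem_image, Finset.coe_erase]
        rcases par_of_adj K s t h with ⟨h1, h2⟩ | ⟨h1, h2⟩
        · exact ⟨s, by simpa using h1, by rw [← h2]⟩
        · exact ⟨t, by simpa using h1, by rw [← h2, Sym2.eq_swap]⟩
    have h1 := Set.ncard_le_ncard hsub (Finset.finite_toSet _)
    rw [Set.ncard_coe_finset] at h1
    have h2 : ((Finset.univ.erase (top K)).image (fun s => s(s, par K s))).card ≤ _ :=
      Finset.card_image_le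
    rw [Finset.card_erase_of_mem (Finset.mem_univ _), Finset.card_univ, Fintype.card_fin] at h2
    rw [Nat.card_coe_set_eq, Nat.card_eq_fintype_card, Fintype.card_fin]
    omega
  · exact (T_conn K).card_vert_le_card_edgeSet_add_one

noncomputable def S (K k : ℕ) (v : Fin (3 + 12 * K)) : Finset (Fin (3 + 12 * K) × Fin (3 + 12 * K)) :=
  Finset.univ.filter (fun p =>
    2 ≤ (T K).dist p.1 p.2 ∧ (T K).dist p.1 p.2 ≤ k ∧ IsInterior (T K) v p.1 p.2)

def uu (K : ℕ) : Fin (3 + 12 * K) := ⟨0, by omega⟩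
def vv (K : ℕ) : Fin (3 + 12 * K) := ⟨1, by omega⟩
def xx (K : ℕ) : Fin (3 + 12 * K) := ⟨2, by omega⟩

def PS (K m : ℕ) : Finset (Fin (3 + 12 * K)) :=
  Finset.univ.filter (fun s => pos K s < 0 ∧ - pos K s + lf K s ≤ m)
def BS (K m : ℕ) : Finset (Fin (3 + 12 * K)) :=
  Finset.univ.filter (fun s => 1 < pos K s ∧ pos K s - 1 + lf K s ≤ m)

lemma Du (K : ℕ) (t) : D K (uu K) t = (pos K t).natAbs + lf K t := by
  have := Dsp K 0 (by omega) (by omega) t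
  have h2 : D K (uu K) t = (0 - pos K t).natAbs + lf K t := this
  rw [h2]; omega
lemma Dv (K : ℕ) (t) : D K (vv K) t = (pos K t - 1).natAbs + lf K t := by
  have := Dsp K 1 (by omega) (by omega) t
  have h2 : D K (vv K) t = (1 - pos K t).natAbs + lf K t := this
  rw [h2]; omega

/-- classification of a vertex -/
lemma clsn (K n : ℕ) :
    (n = 0 ∧ pos K n = 0 ∧ lf K n = 0) ∨ (n = 1 ∧ pos K n = 1 ∧ lf K n = 0) ∨
    (n = 2 ∧ pos K n = 0 ∧ lf K n = 1) ∨ (3 ≤ n ∧ pos K n < 0) ∨ (3 ≤ n ∧ 1 < pos K n) := by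
  unfold pos lf; split_ifs <;> omega

lemma ne_uv (K : ℕ) : uu K ≠ vv K := by simp [uu, vv]
lemma ne_ux (K : ℕ) : uu K ≠ xx K := by simp [uu, xx]
lemma ne_vx (K : ℕ) : vv K ≠ xx K := by simp [vv, xx]

lemma mem_Su (K k : ℕ) (s t : Fin (3 + 12 * K)) : (s, t) ∈ S K k (uu K) ↔
    (s ≠ t ∧ (pos K s - pos K t).natAbs + lf K s + lf K t ≤ k ∧ uu K ≠ s ∧ uu K ≠ t ∧
      (pos K s).natAbs + (pos K t).natAbs = (pos K s - pos K t).natAbs) := by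
  simp only [S, Finset.mem_filter, Finset.mem_univ, true_and, IsInterior, T_dist,
    Dsymm K s (uu K), Du]
  by_cases h : s = t
  · subst h
    simp [D]
  · have e : D K s t = (pos K s - pos K t).natAbs + lf K s + lf K t := by
      unfold D; rw [if_neg h]
    rw [e]
    constructor
    · rintro ⟨h1, h2, h3, h4, h5⟩
      exact ⟨h, h2, h3, h4, by omega⟩
    · rintro ⟨_, h2, h3, h4, h5⟩
      refine ⟨?_, h2, h3, h4, by omega⟩
      have a := D0 K (uu K) s
      have b := D0 K (uu K) t
      rw [Du] at a b
      have := mt a.1 h3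
      have := mt b.1 h4
      omega

lemma mem_Sv (K k : ℕ) (s t : Fin (3 + 12 * K)) : (s, t) ∈ S K k (vv K) ↔
    (s ≠ t ∧ (pos K s - pos K t).natAbs + lf K s + lf K t ≤ k ∧ vv K ≠ s ∧ vv K ≠ t ∧
      (pos K s - 1).natAbs + (pos K t - 1).natAbs = (pos K s - pos K t).natAbs) := by
  simp only [S, Finset.mem_filter, Finset.mem_univ, true_and, IsInterior, T_dist,
    Dsymm K s (vv K), Dv]
  by_cases h : s = t
  · subst h
    simp [D]
  · have e : D K s t = (pos K s - pos K t).natAbs + lf K s + lf K t := by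
      unfold D; rw [if_neg h]
    rw [e]
    constructor
    · rintro ⟨h1, h2, h3, h4, h5⟩
      exact ⟨h, h2, h3, h4, by omega⟩
    · rintro ⟨_, h2, h3, h4, h5⟩
      refine ⟨?_, h2, h3, h4, by omega⟩
      have a := D0 K (vv K) s
      have b := D0 K (vv K) t
      rw [Dv] at a b
      have := mt a.1 h3
      have := mt b.1 h4
      omega

lemma Su_sdiff (K m : ℕ) (hm : 1 ≤ m) : S K (m + 1) (uu K) \ S K (m + 1) (vv K) =
    (({vv K, xx K} : Finset _) ×ˢ PS K m ∪ PS K m ×ˢ ({vv K, xx K} : Finset _)) ∪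
      {(xx K, vv K), (vv K, xx K)} := by
  ext ⟨s, t⟩
  rw [Finset.mem_sdiff, mem_Su, mem_Sv]
  simp only [Finset.mem_union, Finset.mem_product, Finset.mem_insert, Finset.mem_singleton,
    PS, Finset.mem_filter, Finset.mem_univ, true_and, Prod.mk.injEq]
  have hst : (s : ℕ) = t → pos K s = pos K t := fun h => by rw [h]
  have cs := clsn K s
  have ct := clsn K t
  have l1 := lf_le K s
  have l2 := lf_le K t
  simp only [ne_eq, Fin.ext_iff, uu, vv, xx]
  generalize pos K s = ps at *
  generalize pos K t = pt at *
  generalize lf K s = ls at *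
  generalize lf K t = lt at *
  generalize (s : ℕ) = a at *
  generalize (t : ℕ) = b at *
  rcases cs with ⟨rfl, rfl, rfl⟩ | ⟨rfl, rfl, rfl⟩ | ⟨rfl, rfl, rfl⟩ | ⟨h1, h2⟩ | ⟨h1, h2⟩ <;>
  rcases ct with ⟨rfl, rfl, rfl⟩ | ⟨rfl, rfl, rfl⟩ | ⟨rfl, rfl, rfl⟩ | ⟨h3, h4⟩ | ⟨h3, h4⟩ <;>
  omega

lemma Sv_sdiff (K m : ℕ) : S K (m + 1) (vv K) \ S K (m + 1) (uu K) =
    (({uu K} : Finset _) ×ˢ BS K m ∪ BS K m ×ˢ ({uu K} : Finset _)) := by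
  ext ⟨s, t⟩
  rw [Finset.mem_sdiff, mem_Su, mem_Sv]
  simp only [Finset.mem_union, Finset.mem_product, Finset.mem_singleton,
    BS, Finset.mem_filter, Finset.mem_univ, true_and]
  have hst : (s : ℕ) = t → pos K s = pos K t := fun h => by rw [h]
  have cs := clsn K s
  have ct := clsn K t
  have l1 := lf_le K s
  have l2 := lf_le K t
  simp only [ne_eq, Fin.ext_iff, uu, vv, xx]
  generalize pos K s = ps at *
  generalize pos K t = pt at *
  generalize lf K s = ls at *
  generalize lf K t = lt at *
  generalize (s : ℕ) = a at *
  generalize (t : ℕ) = b at *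
  rcases cs with ⟨rfl, rfl, rfl⟩ | ⟨rfl, rfl, rfl⟩ | ⟨rfl, rfl, rfl⟩ | ⟨h1, h2⟩ | ⟨h1, h2⟩ <;>
  rcases ct with ⟨rfl, rfl, rfl⟩ | ⟨rfl, rfl, rfl⟩ | ⟨rfl, rfl, rfl⟩ | ⟨h3, h4⟩ | ⟨h3, h4⟩ <;>
  omega

lemma card_int (N a b : ℕ) (h : a + b ≤ N) :
    (Finset.univ.filter (fun s : Fin N => a ≤ (s : ℕ) ∧ (s : ℕ) < a + b)).card = b := by
  have : (Finset.univ.filter (fun s : Fin N => a ≤ (s : ℕ) ∧ (s : ℕ) < a + b)).map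
      Fin.valEmbedding = Finset.Ico a (a + b) := by
    ext n
    simp only [Finset.mem_map, Finset.mem_filter, Finset.mem_univ, true_and, Finset.mem_Ico,
      Fin.valEmbedding_apply]
    constructor
    · rintro ⟨s, h, rfl⟩; exact h
    · intro h'; exact ⟨⟨n, by omega⟩, h', rfl⟩
  rw [← Finset.card_map Fin.valEmbedding, this, Nat.card_Ico]; omega

lemma PS_odd (K j : ℕ) (hj : j < K) : (PS K (2 * j + 1)).card = 4 * j + 1 := by
  rw [← card_int (3 + 12 * K) 3 (4 * j + 1) (by omega)]
  congr 1
  apply Finset.filter_congr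
  intro s _
  have := depth_u_odd K s j hj s.2
  push_cast; exact this
lemma PS_even (K j : ℕ) (hj : j < K) : (PS K (2 * j + 2)).card = 4 * j + 2 := by
  rw [← card_int (3 + 12 * K) 3 (4 * j + 2) (by omega)]
  congr 1
  apply Finset.filter_congr
  intro s _
  have := depth_u_even K s j hj s.2
  push_cast; exact this
lemma BS_odd (K j : ℕ) (hj : j < K) : (BS K (2 * j + 1)).card = 8 * j + 1 := by
  rw [← card_int (3 + 12 * K) (3 + 4 * K) (8 * j + 1) (by omega)]
  congr 1
  apply Finset.filter_congr
  intro s _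
  have := depth_v_odd K s j hj s.2
  push_cast; exact this
lemma BS_even (K j : ℕ) (hj : j < K) : (BS K (2 * j + 2)).card = 8 * j + 8 := by
  rw [← card_int (3 + 12 * K) (3 + 4 * K) (8 * j + 8) (by omega)]
  congr 1
  apply Finset.filter_congr
  intro s _
  have := depth_v_even K s j hj s.2
  push_cast; exact this

lemma pv (K : ℕ) : pos K (vv K) = 1 := (pos_one K _).2 rfl
lemma pu (K : ℕ) : pos K (uu K) = 0 := (pos_zero K _).2 (Or.inl rfl)
lemma px (K : ℕ) : pos K (xx K) = 0 := (pos_zero K _).2 (Or.inr rfl)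

lemma Su_card (K m : ℕ) (hm : 1 ≤ m) :
    (S K (m + 1) (uu K) \ S K (m + 1) (vv K)).card = 4 * (PS K m).card + 2 := by
  have hv : vv K ∉ PS K m := by simp [PS, pv]
  have hx : xx K ∉ PS K m := by simp [PS, px]
  rw [Su_sdiff K m hm, Finset.card_union_of_disjoint, Finset.card_union_of_disjoint,
    Finset.card_product, Finset.card_product, Finset.card_pair (ne_vx K), Finset.card_pair]
  · omega
  · simp [ne_vx K]
  · rw [Finset.disjoint_left]
    rintro ⟨s, t⟩ h1 h2
    simp only [Finset.mem_product, Finset.mem_insert, Finset.mem_singleton] at h1 h2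
    rcases h1.1 with rfl | rfl
    · exact hv h2.1
    · exact hx h2.1
  · rw [Finset.disjoint_right]
    intro p h1 h2
    simp only [Finset.mem_insert, Finset.mem_singleton] at h1
    rcases h1 with rfl | rfl <;> simp [hv, hx] at h2

lemma Sv_card (K m : ℕ) :
    (S K (m + 1) (vv K) \ S K (m + 1) (uu K)).card = 2 * (BS K m).card := by
  have hv : uu K ∉ BS K m := by simp [BS, pu]
  rw [Sv_sdiff K m, Finset.card_union_of_disjoint,
    Finset.card_product, Finset.card_product, Finset.card_singleton]
  · omega
  · rw [Finset.disjoint_left]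
    rintro ⟨s, t⟩ h1 h2
    simp only [Finset.mem_product, Finset.mem_singleton] at h1 h2
    rcases h1.1 with rfl
    exact hv h2.1

lemma S_bal (K m : ℕ) (hm : 1 ≤ m) : (S K (m + 1) (uu K)).card + 2 * (BS K m).card =
    (S K (m + 1) (vv K)).card + (4 * (PS K m).card + 2) := by
  have h1 := Su_card K m hm
  have h2 := Sv_card K m
  have h3 := Finset.card_sdiff_add_card_inter (S K (m + 1) (uu K)) (S K (m + 1) (vv K))
  have h4 := Finset.card_sdiff_add_card_inter (S K (m + 1) (vv K)) (S K (m + 1) (uu K))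
  rw [Finset.inter_comm] at h4
  omega

lemma BC_lt (K k : ℕ) (a b : Fin (3 + 12 * K)) (h : (S K k a).card + 2 ≤ (S K k b).card) :
    BC (T K) k a < BC (T K) k b := by
  have hp : Pvtx (T K) k a < Pvtx (T K) k b := by
    have : (S K k a).card / 2 < (S K k b).card / 2 := by omega
    exact this
  have ht : 0 < Ptot (T K) k := by
    refine lt_of_lt_of_le (Nat.lt_of_le_of_lt (Nat.zero_le _) hp) ?_
    unfold Pvtx Ptot
    apply Nat.div_le_div_right
    apply Finset.card_le_card
    intro p hp
    simp only [Finset.mem_filter] at hp ⊢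
    exact ⟨hp.1, hp.2.1, hp.2.2.1⟩
  unfold BC
  have : (0 : ℝ) < Ptot (T K) k := by exact_mod_cast ht
  apply div_lt_div_of_pos_right _ this
  exact_mod_cast hp

lemma T_diam (K : ℕ) : diam (T K) ≤ 4 * K + 3 := by
  unfold diam
  apply Finset.sup_le
  rintro ⟨s, t⟩ _
  simp only [T_dist]
  have := pos_bd K s s.2
  have := pos_bd K t t.2
  have := lf_le K s
  have := lf_le K t
  unfold D
  split_ifs <;> omega

end ManyCross

/-- For any `ℓ ≥ 2` there is a tree of diameter at most `6ℓ` with two vertices `u`, `v`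
whose profiles cross `Ω(ℓ)` times: `BC_{2i}(u) > BC_{2i}(v)` and
`BC_{2i+1}(v) > BC_{2i+1}(u)` for every `1 ≤ i ≤ ℓ - 1`. -/
theorem exists_tree_with_many_crossings (l : ℕ) (hl : 2 ≤ l) :
    ∃ (N : ℕ) (G : SimpleGraph (Fin N)) (u v : Fin N), G.IsTree ∧ diam G ≤ 6 * l ∧
      ∀ i : ℕ, 1 ≤ i → i ≤ l - 1 →
        BC G (2*i) u > BC G (2*i) v ∧ BC G (2*i+1) v > BC G (2*i+1) u := by
  refine ⟨_, ManyCross.T (l - 1), ManyCross.uu _, ManyCross.vv _, ManyCross.T_tree _, ?_, ?_⟩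
  · have := ManyCross.T_diam (l - 1)
    omega
  · intro i h1 h2
    obtain ⟨j, rfl⟩ : ∃ j, i = j + 1 := ⟨i - 1, by omega⟩
    constructor
    · apply ManyCross.BC_lt
      have h := ManyCross.S_bal (l - 1) (2 * j + 1) (by omega)
      rw [ManyCross.PS_odd _ _ (by omega), ManyCross.BS_odd _ _ (by omega)] at h
      have e : 2 * (j + 1) = 2 * j + 1 + 1 := by ring
      rw [e]
      omega
    · apply ManyCross.BC_lt
      have h := ManyCross.S_bal (l - 1) (2 * j + 2) (by omega)
      rw [ManyCross.PS_even _ _ (by omega), ManyCross.BS_even _ _ (by omega)] at h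
      have e : 2 * (j + 1) + 1 = 2 * j + 2 + 1 := by ring
      rw [e]
      omega
end

section
/- For every real ε > 0 there exists an integer d₀ such that for every integer d ≥ d₀ there exist a finite tree T of diameter exactly d and a vertex v of T with BC_d(v) > 0 such that for every integer k with 2 ≤ k < d, BC_k(v) < ε · BC_d(v). -/
open scoped Classical

def bpos (m d i : ℕ) : ℕ := min d (i - (m - 1))

def broom (m d : ℕ) : SimpleGraph (Fin (2 * m + d - 1)) where
  Adj i j := bpos m d i + 1 = bpos m d j ∨ bpos m d j + 1 = bpos m d i
  symm := ⟨fun _ _ h => h.symm⟩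
  loopless := ⟨fun i h => by rcases h with h | h <;> omega⟩

theorem broom_adj (m d : ℕ) (i j : Fin (2 * m + d - 1)) : (broom m d).Adj i j ↔
    (bpos m d i + 1 = bpos m d j ∨ bpos m d j + 1 = bpos m d i) := Iff.rfl

theorem broom_walk_lower (m d : ℕ) {i j : Fin (2 * m + d - 1)} (w : (broom m d).Walk i j) :
    bpos m d j ≤ bpos m d i + w.length ∧ bpos m d i ≤ bpos m d j + w.length := by
  induction w with
  | nil => simp
  | cons h p ih =>
    rw [broom_adj] at h
    simp only [SimpleGraph.Walk.length_cons]
    omega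

theorem broom_walk_upper (m d : ℕ) (hm : 1 ≤ m) (hd : 4 ≤ d) (n : ℕ) :
    ∀ i j : Fin (2 * m + d - 1), bpos m d j = bpos m d i + n + 1 →
    ∃ w : (broom m d).Walk i j, w.length = n + 1 := by
  induction n with
  | zero =>
    intro i j h
    have h1 : (broom m d).Adj i j := by rw [broom_adj]; omega
    exact ⟨.cons h1 .nil, by simp⟩
  | succ n ih =>
    intro i j h
    have hi := i.2
    have hj := j.2
    have hb : bpos m d j ≤ d := min_le_left _ _
    let z : Fin (2 * m + d - 1) := ⟨m + bpos m d i, by omega⟩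
    have hz : bpos m d z = bpos m d i + 1 := by
      change bpos m d (m + bpos m d i) = _
      clear_value z
      generalize bpos m d i = a at *
      generalize bpos m d j = b at *
      unfold bpos; omega
    have h1 : (broom m d).Adj i z := by rw [broom_adj]; omega
    obtain ⟨w, hw⟩ := ih z j (by omega)
    exact ⟨.cons h1 w, by simp [hw]⟩

theorem broom_connected (m d : ℕ) (hm : 1 ≤ m) (hd : 4 ≤ d) : (broom m d).Connected := by
  rw [SimpleGraph.connected_iff_exists_forall_reachable]
  refine ⟨⟨m, by omega⟩, fun x => ?_⟩
  set r : Fin (2 * m + d - 1) := ⟨m, by omega⟩ with hr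
  have hr1 : bpos m d r = 1 := by change bpos m d m = 1; unfold bpos; omega
  rcases lt_trichotomy (bpos m d r) (bpos m d x) with h | h | h
  · obtain ⟨w, -⟩ := broom_walk_upper m d hm hd (bpos m d x - bpos m d r - 1) r x (by omega)
    exact ⟨w⟩
  · have : r = x := by
      apply Fin.ext
      change m = (x : ℕ)
      rw [hr1] at h
      unfold bpos at h; omega
    rw [this]
  · obtain ⟨w, -⟩ := broom_walk_upper m d hm hd (bpos m d r - bpos m d x - 1) x r (by omega)
    exact ⟨w.reverse⟩

theorem broom_dist_ge (m d : ℕ) (hm : 1 ≤ m) (hd : 4 ≤ d) (i j : Fin (2 * m + d - 1)) :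
    bpos m d j ≤ bpos m d i + (broom m d).dist i j ∧
    bpos m d i ≤ bpos m d j + (broom m d).dist i j := by
  obtain ⟨w, hw⟩ := (broom_connected m d hm hd).exists_walk_length_eq_dist i j
  rw [← hw]
  exact broom_walk_lower m d w

theorem broom_dist_lt (m d : ℕ) (hm : 1 ≤ m) (hd : 4 ≤ d) (i j : Fin (2 * m + d - 1))
    (h : bpos m d i < bpos m d j) :
    (broom m d).dist i j = bpos m d j - bpos m d i := by
  obtain ⟨w, hw⟩ := broom_walk_upper m d hm hd (bpos m d j - bpos m d i - 1) i j (by omega)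
  have := SimpleGraph.dist_le w
  have := broom_dist_ge m d hm hd i j
  omega

theorem broom_dist_eq_le (m d : ℕ) (hm : 1 ≤ m) (hd : 4 ≤ d) (i j : Fin (2 * m + d - 1))
    (h : bpos m d i = bpos m d j) : (broom m d).dist i j ≤ 2 := by
  have hi := i.2
  obtain ⟨z, hz⟩ : ∃ z : Fin (2 * m + d - 1), bpos m d z = bpos m d i + 1 ∨
      bpos m d i = bpos m d z + 1 := by
    by_cases h0 : bpos m d i = 0
    · refine ⟨⟨m, by omega⟩, Or.inl ?_⟩
      rw [h0]; change bpos m d m = _; unfold bpos; omega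
    · have hb : bpos m d i ≤ d := min_le_left _ _
      refine ⟨⟨m + bpos m d i - 2, by omega⟩, Or.inr ?_⟩
      change _ = bpos m d (m + bpos m d i - 2) + 1
      generalize bpos m d i = a at *
      unfold bpos; omega
  have h1 : (broom m d).Adj i z := by rw [broom_adj]; omega
  have h2 : (broom m d).Adj z j := by rw [broom_adj]; omega
  have := SimpleGraph.dist_le (SimpleGraph.Walk.cons h1 (SimpleGraph.Walk.cons h2 .nil))
  simpa using this

theorem broom_dist_eq_ge (m d : ℕ) (hm : 1 ≤ m) (hd : 4 ≤ d) (i j : Fin (2 * m + d - 1))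
    (h : bpos m d i = bpos m d j) (hne : i ≠ j) : 2 ≤ (broom m d).dist i j := by
  have h0 : (broom m d).dist i j ≠ 0 := by
    rw [Ne, (broom_connected m d hm hd).dist_eq_zero_iff]; exact hne
  have h1 : (broom m d).dist i j ≠ 1 := by
    rw [Ne, SimpleGraph.dist_eq_one_iff_adj, broom_adj]; omega
  omega

theorem broom_tree (m d : ℕ) (hm : 1 ≤ m) (hd : 4 ≤ d) : (broom m d).IsTree := by
  have hc := broom_connected m d hm hd
  rw [SimpleGraph.isTree_iff_connected_and_card]
  refine ⟨hc, le_antisymm ?_ hc.card_vert_le_card_edgeSet_add_one⟩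
  let r : Fin (2 * m + d - 1) := ⟨m, by omega⟩
  let par : Fin (2 * m + d - 1) → Fin (2 * m + d - 1) := fun i =>
    if (i : ℕ) < m then r else ⟨min (i - 1) (m + d - 2), by omega⟩
  have hsub : (broom m d).edgeSet ⊆
      (fun i => s(i, par i)) '' ((Finset.univ.erase r : Finset _) : Set (Fin (2 * m + d - 1))) := by
    have key : ∀ x y : Fin (2 * m + d - 1), bpos m d x + 1 = bpos m d y →
        (x ≠ r ∧ par x = y) ∨ (y ≠ r ∧ par y = x) := by
      intro x y h
      have hx := x.2
      have hy := y.2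
      unfold bpos at h
      simp only [par, r, Ne, Fin.ext_iff]
      by_cases hxm : (x : ℕ) < m
      · left; rw [if_pos hxm]; constructor
        · omega
        · change m = (y : ℕ); omega
      · right; rw [if_neg (by omega)]; constructor
        · omega
        · change min ((y : ℕ) - 1) (m + d - 2) = (x : ℕ); omega
    intro e
    induction e using Sym2.ind with
    | _ x y =>
      intro h
      rw [SimpleGraph.mem_edgeSet, broom_adj] at h
      have : (x ≠ r ∧ par x = y) ∨ (y ≠ r ∧ par y = x) := by
        rcases h with h | h
        · exact key x y h
        · exact (key y x h).symm
      rcases this with ⟨h1, h2⟩ | ⟨h1, h2⟩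
      · exact ⟨x, by simpa using h1, by simp [h2]⟩
      · exact ⟨y, by simpa using h1, by simp [h2, Sym2.eq_swap]⟩
  have h1 : (broom m d).edgeSet.ncard ≤ 2 * m + d - 1 - 1 := by
    refine (Set.ncard_le_ncard hsub (Set.toFinite _)).trans ?_
    refine (Set.ncard_image_le (Set.toFinite _)).trans ?_
    rw [Set.ncard_coe_finset, Finset.card_erase_of_mem (Finset.mem_univ _)]
    simp
  rw [Nat.card_coe_set_eq, Nat.card_eq_fintype_card, Fintype.card_fin]
  omega

theorem card_fin_filter (N a b : ℕ) (hb : b ≤ N) :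
    (Finset.univ.filter (fun i : Fin N => a ≤ (i : ℕ) ∧ (i : ℕ) < b)).card = b - a := by
  rw [← Nat.card_Ico, ← Finset.card_map Fin.valEmbedding]
  congr 1
  ext x
  simp only [Finset.mem_map, Finset.mem_filter, Finset.mem_univ, true_and, Fin.valEmbedding_apply,
    Finset.mem_Ico]
  constructor
  · rintro ⟨i, h, rfl⟩; exact h
  · intro h; exact ⟨⟨x, by omega⟩, h, rfl⟩

theorem broom_diam (m d : ℕ) (hm : 1 ≤ m) (hd : 4 ≤ d) : diam (broom m d) = d := by
  unfold diam
  apply le_antisymm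
  · apply Finset.sup_le
    rintro ⟨i, j⟩ -
    have hb : ∀ i, bpos m d i ≤ d := fun i => min_le_left _ _
    have := hb i
    have := hb j
    rcases lt_trichotomy (bpos m d i) (bpos m d j) with h | h | h
    · have := broom_dist_lt m d hm hd i j h
      simp only; omega
    · have := broom_dist_eq_le m d hm hd i j h
      simp only; omega
    · have := broom_dist_lt m d hm hd j i h
      rw [SimpleGraph.dist_comm] at this
      simp only; omega
  · let i : Fin (2 * m + d - 1) := ⟨0, by omega⟩
    let j : Fin (2 * m + d - 1) := ⟨2 * m + d - 2, by omega⟩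
    have hi : bpos m d i = 0 := by change bpos m d 0 = 0; unfold bpos; omega
    have hj : bpos m d j = d := by
      change bpos m d (2 * m + d - 2) = d; unfold bpos; omega
    have := broom_dist_lt m d hm hd i j (by omega)
    have h2 := Finset.le_sup (f := fun p : Fin (2 * m + d - 1) × Fin (2 * m + d - 1) =>
      (broom m d).dist p.1 p.2) (Finset.mem_univ (i, j))
    simp only at h2
    omega

theorem broom_Ptot_ge (m d k : ℕ) (hm : 1 ≤ m) (hd : 4 ≤ d) (hk : 2 ≤ k) :
    (m * m - m) / 2 ≤ Ptot (broom m d) k := by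
  unfold Ptot
  apply Nat.div_le_div_right
  have hc := card_fin_filter (2 * m + d - 1) 0 m (by omega)
  set S := Finset.univ.filter (fun i : Fin (2 * m + d - 1) => 0 ≤ (i : ℕ) ∧ (i : ℕ) < m) with hS
  have : S.offDiag.card = m * m - m := by rw [Finset.offDiag_card, hc]; simp
  rw [← this]
  apply Finset.card_le_card
  rintro ⟨i, j⟩ h
  simp only [hS, Finset.mem_offDiag, Finset.mem_filter, Finset.mem_univ, true_and] at h
  obtain ⟨⟨_, h1⟩, ⟨_, h2⟩, h3⟩ := h
  have he : bpos m d i = bpos m d j := by unfold bpos; omega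
  have := broom_dist_eq_le m d hm hd i j he
  have := broom_dist_eq_ge m d hm hd i j he h3
  simp only [Finset.mem_filter, Finset.mem_univ, true_and]
  omega

theorem broom_Ptot_le (m d k : ℕ) :
    Ptot (broom m d) k ≤ (2 * m + d - 1) * (2 * m + d - 1) := by
  unfold Ptot
  refine (Nat.div_le_self _ _).trans ?_
  refine (Finset.card_le_univ _).trans ?_
  simp

theorem broom_Pvtx_ge (m d : ℕ) (hm : 1 ≤ m) (hd : 4 ≤ d) (v : Fin (2 * m + d - 1))
    (hv : (v : ℕ) = m + 1) : m * m ≤ Pvtx (broom m d) d v := by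
  unfold Pvtx
  rw [Nat.le_div_iff_mul_le (by norm_num)]
  have hA := card_fin_filter (2 * m + d - 1) 0 m (by omega)
  have hB := card_fin_filter (2 * m + d - 1) (m + d - 1) (2 * m + d - 1) le_rfl
  set A := Finset.univ.filter (fun i : Fin (2 * m + d - 1) => 0 ≤ (i : ℕ) ∧ (i : ℕ) < m) with hAd
  set B := Finset.univ.filter (fun i : Fin (2 * m + d - 1) =>
    m + d - 1 ≤ (i : ℕ) ∧ (i : ℕ) < 2 * m + d - 1) with hBd
  have hdis : Disjoint (A ×ˢ B) (B ×ˢ A) := by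
    rw [Finset.disjoint_left]
    rintro ⟨i, j⟩ h1 h2
    simp only [hAd, hBd, Finset.mem_product, Finset.mem_filter, Finset.mem_univ, true_and] at h1 h2
    omega
  have hcard : (A ×ˢ B ∪ B ×ˢ A).card = m * m * 2 := by
    rw [Finset.card_union_of_disjoint hdis, Finset.card_product, Finset.card_product, hA, hB]
    have : 2 * m + d - 1 - (m + d - 1) = m := by omega
    rw [this]; simp; ring
  rw [← hcard]
  apply Finset.card_le_card
  have hv2 : bpos m d v = 2 := by rw [hv]; unfold bpos; omega
  have main : ∀ i j : Fin (2 * m + d - 1), i ∈ A → j ∈ B →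
      (broom m d).dist i j = d ∧ (broom m d).dist i v = 2 ∧ (broom m d).dist v j = d - 2 ∧
      v ≠ i ∧ v ≠ j := by
    intro i j hi hj
    simp only [hAd, hBd, Finset.mem_filter, Finset.mem_univ, true_and] at hi hj
    have hi0 : bpos m d i = 0 := by unfold bpos; omega
    have hj0 : bpos m d j = d := by unfold bpos; omega
    have h1 := broom_dist_lt m d hm hd i j (by omega)
    have h2 := broom_dist_lt m d hm hd i v (by omega)
    have h3 := broom_dist_lt m d hm hd v j (by omega)
    refine ⟨by omega, by omega, by omega, ?_, ?_⟩
    · rintro rfl; omega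
    · rintro rfl; omega
  rintro ⟨i, j⟩ h
  rw [Finset.mem_union, Finset.mem_product, Finset.mem_product] at h
  rw [Finset.mem_filter]
  refine ⟨Finset.mem_univ _, ?_⟩
  change 2 ≤ (broom m d).dist i j ∧ (broom m d).dist i j ≤ d ∧ v ≠ i ∧ v ≠ j ∧
    (broom m d).dist i v + (broom m d).dist v j = (broom m d).dist i j
  rcases h with ⟨hi, hj⟩ | ⟨hi, hj⟩
  · obtain ⟨h1, h2, h3, h4, h5⟩ := main i j hi hj
    exact ⟨by omega, by omega, h4, h5, by omega⟩
  · obtain ⟨h1, h2, h3, h4, h5⟩ := main j i hj hi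
    rw [SimpleGraph.dist_comm] at h1 h2 h3
    exact ⟨by omega, by omega, h5, h4, by omega⟩

theorem broom_Pvtx_le (m d k : ℕ) (hm : 1 ≤ m) (hd : 4 ≤ d) (hk : k < d)
    (v : Fin (2 * m + d - 1))
    (hv : (v : ℕ) = m + 1) : Pvtx (broom m d) k v ≤ (d - 1) * (2 * m + d - 1) := by
  unfold Pvtx
  have hA := card_fin_filter (2 * m + d - 1) m (m + d - 1) (by omega)
  set A := Finset.univ.filter (fun i : Fin (2 * m + d - 1) => m ≤ (i : ℕ) ∧ (i : ℕ) < m + d - 1)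
    with hAd
  have hcard : (A ×ˢ Finset.univ ∪ Finset.univ ×ˢ A).card ≤ (d - 1) * (2 * m + d - 1) * 2 := by
    refine (Finset.card_union_le _ _).trans ?_
    rw [Finset.card_product, Finset.card_product, hA, Finset.card_univ, Fintype.card_fin]
    have : m + d - 1 - m = d - 1 := by omega
    rw [this]
    apply le_of_eq; ring
  apply Nat.div_le_of_le_mul
  refine le_trans (Finset.card_le_card ?_) (hcard.trans (mul_comm _ _).le)
  rintro ⟨i, j⟩ h
  rw [Finset.mem_filter] at h
  obtain ⟨-, h1, h2, h3, h4, h5⟩ := h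
  simp only at h1 h2 h3 h4 h5
  simp only [hAd, Finset.mem_union, Finset.mem_product, Finset.mem_filter, Finset.mem_univ,
    true_and, and_true]
  by_contra hcon
  have hv2 : bpos m d v = 2 := by rw [hv]; unfold bpos; omega
  have hi := i.2
  have hj := j.2
  have pi : bpos m d i = 0 ∨ bpos m d i = d := by unfold bpos; omega
  have pj : bpos m d j = 0 ∨ bpos m d j = d := by unfold bpos; omega
  have e1 := broom_dist_ge m d hm hd i j
  have e2 := broom_dist_ge m d hm hd i v
  have e3 := broom_dist_ge m d hm hd v j
  by_cases hij : bpos m d i = bpos m d j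
  · have := broom_dist_eq_le m d hm hd i j hij
    omega
  · omega

/-- `k`-betweenness centralities can be arbitrarily small relative to betweenness
centrality: for every `ε > 0` and every large enough diameter `d` there are a tree of
diameter `d` and a vertex `v` with `BC_k(v) < ε · BC_d(v)` for every `2 ≤ k < d`. -/
theorem BC_k_can_be_much_smaller (ε : ℝ) (hε : 0 < ε) :
    ∃ d₀ : ℕ, ∀ d : ℕ, d₀ ≤ d →
      ∃ (N : ℕ) (G : SimpleGraph (Fin N)) (v : Fin N), G.IsTree ∧ diam G = d ∧
        0 < BC G d v ∧ ∀ k : ℕ, 2 ≤ k → k < d → BC G k v < ε * BC G d v := by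
  refine ⟨4, fun d hd => ?_⟩
  obtain ⟨n, hn⟩ := exists_nat_gt (200 * d / ε)
  set m := n + d + 2 with hmd
  have hm : 1 ≤ m := by omega
  let v : Fin (2 * m + d - 1) := ⟨m + 1, by omega⟩
  have hv : (v : ℕ) = m + 1 := rfl
  have hN : 2 * m + d - 1 ≤ 3 * m := by omega
  have hmpos : (0 : ℝ) < m := by exact_mod_cast hm
  have hPd := broom_Pvtx_ge m d hm hd v hv
  have hT : ∀ k, 2 ≤ k → (m : ℝ) * n / 2 ≤ Ptot (broom m d) k := by
    intro k hk
    have h := broom_Ptot_ge m d k hm hd hk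
    have h2 : m * n ≤ 2 * Ptot (broom m d) k := by
      have h3 : m * m = m * n + m * d + 2 * m := by rw [hmd]; ring
      have : m * d ≥ 0 := Nat.zero_le _
      omega
    have h4 : (m : ℝ) * n ≤ 2 * Ptot (broom m d) k := by exact_mod_cast h2
    linarith
  have hn0 : (0 : ℝ) < n := lt_of_le_of_lt (by positivity) hn
  have hTd := broom_Ptot_le m d d
  have hTd' : (Ptot (broom m d) d : ℝ) ≤ 9 * m ^ 2 := by
    have : Ptot (broom m d) d ≤ 9 * m ^ 2 := hTd.trans ((Nat.mul_le_mul hN hN).trans (by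
      apply le_of_eq; ring))
    exact_mod_cast this
  have hTpos : ∀ k, 2 ≤ k → (0 : ℝ) < Ptot (broom m d) k := fun k hk =>
    lt_of_lt_of_le (by positivity) (hT k hk)
  have hPd' : (m : ℝ) ^ 2 ≤ Pvtx (broom m d) d v := by
    have : m ^ 2 ≤ Pvtx (broom m d) d v := by rw [sq]; exact hPd
    exact_mod_cast this
  have hBC : 1 / 9 ≤ BC (broom m d) d v := by
    unfold BC
    rw [le_div_iff₀ (hTpos d (by omega))]
    linarith
  refine ⟨_, broom m d, v, broom_tree m d hm hd, broom_diam m d hm hd, by linarith, ?_⟩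
  intro k hk hkd
  have hPk := broom_Pvtx_le m d k hm hd hkd v hv
  have hPk' : (Pvtx (broom m d) k v : ℝ) ≤ d * (3 * m) := by
    have : Pvtx (broom m d) k v ≤ d * (3 * m) := hPk.trans (Nat.mul_le_mul (by omega) hN)
    exact_mod_cast this
  rw [div_lt_iff₀ hε] at hn
  have : BC (broom m d) k v < ε * (1 / 9) := by
    unfold BC
    rw [div_lt_iff₀ (hTpos k hk)]
    have h1 : ε * (1 / 9) * ((m : ℝ) * n / 2) ≤ ε * (1 / 9) * Ptot (broom m d) k :=
      mul_le_mul_of_nonneg_left (hT k hk) (by positivity)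
    have h2 : (m : ℝ) * (200 * d) < m * (n * ε) := mul_lt_mul_of_pos_left hn hmpos
    have h3 : (0 : ℝ) ≤ m * d := by positivity
    nlinarith
  exact this.trans_le (mul_le_mul_of_nonneg_left hBC hε.le)
end

section
/- For every real C > 0 there exist an integer d₀ and a real ε > 0 such that for every integer d ≥ d₀ there exist a finite tree T of diameter exactly d and a vertex v of T such that for every integer k with 2 ≤ k ≤ ε·d, BC_k(v) > C · BC_d(v). -/
open scoped Classical

/-- explicit distance function of the broom -/
def brD (d i j : ℕ) : ℕ :=
  if i = j then 0 else
  if i < d then (if j < d then (i - j) + (j - i) else i + 1)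
  else (if j < d then j + 1 else 2)

/-- the broom graph -/
def brG (d m : ℕ) : SimpleGraph (Fin (d + m)) where
  Adj i j := brD d i j = 1
  symm := ⟨by
    intro i j h
    unfold brD at *
    split_ifs at * <;> omega⟩
  loopless := ⟨by
    intro i h
    simp [brD] at h⟩

lemma brG_adj (d m : ℕ) (i j : Fin (d + m)) : (brG d m).Adj i j ↔ brD d i j = 1 := Iff.rfl

lemma brD_step (d m : ℕ) (hd : 2 ≤ d) (i j : Fin (d + m)) (n : ℕ) (h : brD d i j = n + 1) :
    ∃ l : Fin (d + m), (brG d m).Adj i l ∧ brD d l j = n := by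
  have hi := i.2
  have hj := j.2
  have key : ∃ l : ℕ, l < d + m ∧ brD d i l = 1 ∧ brD d l j = n := by
    by_cases h1 : (i : ℕ) < d
    · by_cases h2 : (j : ℕ) < d
      · by_cases h3 : (i : ℕ) < j
        · refine ⟨i + 1, by omega, ?_, ?_⟩ <;> unfold brD at * <;> split_ifs at * <;> omega
        · refine ⟨i - 1, by omega, ?_, ?_⟩ <;> unfold brD at * <;> split_ifs at * <;> omega
      · by_cases h3 : (i : ℕ) = 0
        · refine ⟨j, by omega, ?_, ?_⟩ <;> unfold brD at * <;> split_ifs at * <;> omega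
        · refine ⟨i - 1, by omega, ?_, ?_⟩ <;> unfold brD at * <;> split_ifs at * <;> omega
    · refine ⟨0, by omega, ?_, ?_⟩ <;> unfold brD at * <;> split_ifs at * <;> omega
  obtain ⟨l, hl, h1, h2⟩ := key
  exact ⟨⟨l, hl⟩, h1, h2⟩

lemma brG_walk (d m : ℕ) (hd : 2 ≤ d) (n : ℕ) : ∀ (i j : Fin (d + m)), brD d i j = n →
    ∃ p : (brG d m).Walk i j, p.length = n := by
  induction n with
  | zero =>
    intro i j h
    have : i = j := by
      apply Fin.ext
      unfold brD at h
      split_ifs at h <;> omega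
    subst this
    exact ⟨SimpleGraph.Walk.nil, rfl⟩
  | succ n ih =>
    intro i j h
    obtain ⟨l, h1, h2⟩ := brD_step d m hd i j n h
    obtain ⟨p, hp⟩ := ih l j h2
    exact ⟨SimpleGraph.Walk.cons h1 p, by simp [hp]⟩

lemma brD_le_walk (d m : ℕ) (i j : Fin (d + m)) (p : (brG d m).Walk i j) :
    brD d i j ≤ p.length := by
  induction p with
  | nil => simp [brD]
  | @cons u v w h p ih =>
    rw [brG_adj] at h
    rw [SimpleGraph.Walk.length_cons]
    have : brD d u w ≤ brD d v w + 1 := by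
      clear ih
      unfold brD at *
      split_ifs at * <;> omega
    omega

lemma brG_conn (d m : ℕ) (hd : 2 ≤ d) : (brG d m).Connected := by
  have : Nonempty (Fin (d + m)) := ⟨⟨0, by omega⟩⟩
  refine SimpleGraph.Connected.mk ?_
  intro i j
  obtain ⟨p, -⟩ := brG_walk d m hd _ i j rfl
  exact ⟨p⟩

lemma brG_dist (d m : ℕ) (hd : 2 ≤ d) (i j : Fin (d + m)) :
    (brG d m).dist i j = brD d i j := by
  apply le_antisymm
  · obtain ⟨p, hp⟩ := brG_walk d m hd _ i j rfl
    rw [← hp]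
    exact SimpleGraph.dist_le p
  · obtain ⟨p, hp⟩ := (brG_conn d m hd).exists_walk_length_eq_dist i j
    rw [← hp]
    exact brD_le_walk d m i j p

lemma brG_tree (d m : ℕ) (hd : 2 ≤ d) : (brG d m).IsTree := by
  rw [SimpleGraph.isTree_iff_connected_and_card]
  refine ⟨brG_conn d m hd, le_antisymm ?_ (brG_conn d m hd).card_vert_le_card_edgeSet_add_one⟩
  let z : Fin (d + m) := ⟨0, by omega⟩
  let par : Fin (d + m) → Fin (d + m) := fun i =>
    ⟨if (i : ℕ) < d then (i : ℕ) - 1 else 0, by have := i.2; split_ifs <;> omega⟩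
  have hsub : (brG d m).edgeSet ⊆
      (((Finset.univ.erase z).image (fun i => s(i, par i)) : Finset (Sym2 (Fin (d + m)))) :
        Set (Sym2 (Fin (d + m)))) := by
    intro e
    induction e using Sym2.ind with
    | _ a b =>
      intro h
      rw [SimpleGraph.mem_edgeSet, brG_adj] at h
      rw [Finset.coe_image, Set.mem_image]
      have ha := a.2
      have hb := b.2
      have : ((a : ℕ) ≠ 0 ∧ (b : ℕ) = (if (a : ℕ) < d then (a : ℕ) - 1 else (0 : ℕ))) ∨
          ((b : ℕ) ≠ 0 ∧ (a : ℕ) = (if (b : ℕ) < d then (b : ℕ) - 1 else (0 : ℕ))) := by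
        unfold brD at h
        split_ifs at * <;> omega
      rcases this with ⟨h1, h2⟩ | ⟨h1, h2⟩
      · refine ⟨a, ?_, ?_⟩
        · simp [z, Fin.ext_iff, h1]
        · have : b = par a := Fin.ext h2
          rw [this]
      · refine ⟨b, ?_, ?_⟩
        · simp [z, Fin.ext_iff, h1]
        · have : a = par b := Fin.ext h2
          rw [this]
          exact Sym2.eq_swap
  have h1 := Set.ncard_le_ncard hsub (Finset.finite_toSet _)
  rw [Set.ncard_coe_finset] at h1
  have h2 := (Finset.card_image_le (s := Finset.univ.erase z) (f := fun i => s(i, par i)))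
  rw [Finset.card_erase_of_mem (Finset.mem_univ z), Finset.card_univ, Fintype.card_fin] at h2
  rw [Nat.card_coe_set_eq, Nat.card_eq_fintype_card, Fintype.card_fin]
  omega

lemma brG_diam (d m : ℕ) (hd : 2 ≤ d) (hm : 1 ≤ m) : diam (brG d m) = d := by
  unfold diam
  apply le_antisymm
  · apply Finset.sup_le
    rintro ⟨i, j⟩ -
    simp only [brG_dist d m hd]
    unfold brD
    split_ifs <;> omega
  · have := Finset.le_sup (f := fun p : Fin (d + m) × Fin (d + m) => (brG d m).dist p.1 p.2)
      (Finset.mem_univ ((⟨d, by omega⟩, ⟨d - 1, by omega⟩) : Fin (d + m) × Fin (d + m)))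
    refine le_trans ?_ this
    simp only [brG_dist d m hd]
    unfold brD
    split_ifs <;> simp at * <;> omega

/-- near pairs on the path -/
def nearP (d k : ℕ) : Finset (ℕ × ℕ) :=
  (Finset.range d ×ˢ Finset.range (2 * k + 1)).image (fun p => (p.1, p.1 + p.2 - k))

lemma nearP_card (d k : ℕ) : (nearP d k).card ≤ d * (2 * k + 1) := by
  unfold nearP
  refine Finset.card_image_le.trans ?_
  simp

lemma mem_nearP (d k i j : ℕ) (hi : i < d) (h1 : i ≤ j + k) (h2 : j ≤ i + k) :
    (i, j) ∈ nearP d k := by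
  unfold nearP
  rw [Finset.mem_image]
  refine ⟨(i, j + k - i), ?_, ?_⟩
  · simp; omega
  · simp; omega

lemma ub_aux (N : ℕ) (S : Finset (Fin N × Fin N)) (T : Finset (ℕ × ℕ))
    (h : ∀ p ∈ S, ((p.1 : ℕ), (p.2 : ℕ)) ∈ T) : S.card ≤ T.card := by
  apply Finset.card_le_card_of_injOn (fun p : Fin N × Fin N => ((p.1 : ℕ), (p.2 : ℕ))) h
  rintro ⟨a, b⟩ - ⟨c, e⟩ - h
  simp only [Prod.mk.injEq] at h
  exact Prod.ext (Fin.ext h.1) (Fin.ext h.2)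

lemma lb_aux (N : ℕ) (S : Finset (Fin N × Fin N)) (T : Finset (ℕ × ℕ))
    (hT : ∀ p ∈ T, p.1 < N ∧ p.2 < N)
    (h : ∀ i j : Fin N, ((i : ℕ), (j : ℕ)) ∈ T → (i, j) ∈ S) : T.card ≤ S.card := by
  have : T ⊆ S.image (fun p => ((p.1 : ℕ), (p.2 : ℕ))) := by
    rintro ⟨a, b⟩ hab
    obtain ⟨h1, h2⟩ := hT _ hab
    rw [Finset.mem_image]
    exact ⟨(⟨a, h1⟩, ⟨b, h2⟩), h ⟨a, h1⟩ ⟨b, h2⟩ hab, rfl⟩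
  exact (Finset.card_le_card this).trans Finset.card_image_le

lemma Ptot_ub (d m k : ℕ) (hd : 2 ≤ d) :
    2 * Ptot (brG d m) k ≤ m * m + 2 * (m * k) + d * (2 * k + 1) := by
  unfold Ptot
  refine (Nat.mul_div_le _ 2).trans ?_
  refine (ub_aux _ _ ((Finset.Ico d (d + m) ×ˢ Finset.Ico d (d + m)) ∪
    (Finset.Ico d (d + m) ×ˢ Finset.range k) ∪ (Finset.range k ×ˢ Finset.Ico d (d + m)) ∪
    nearP d k) ?_).trans ?_
  · rintro ⟨i, j⟩ h
    simp only [Finset.mem_filter, Finset.mem_univ, true_and, brG_dist d m hd] at h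
    have hi := i.2
    have hj := j.2
    simp only [Finset.mem_union, Finset.mem_product, Finset.mem_Ico, Finset.mem_range]
    by_cases h1 : (i : ℕ) < d
    · by_cases h2 : (j : ℕ) < d
      · right
        unfold brD at h
        split_ifs at h <;> apply mem_nearP <;> omega
      · unfold brD at h
        split_ifs at h <;> omega
    · unfold brD at h
      split_ifs at h <;> omega
  · refine (Finset.card_union_le _ _).trans ?_
    have h1 := nearP_card d k
    have h2 := Finset.card_union_le ((Finset.Ico d (d + m) ×ˢ Finset.Ico d (d + m)) ∪
      (Finset.Ico d (d + m) ×ˢ Finset.range k)) (Finset.range k ×ˢ Finset.Ico d (d + m))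
    have h3 := Finset.card_union_le (Finset.Ico d (d + m) ×ˢ Finset.Ico d (d + m))
      (Finset.Ico d (d + m) ×ˢ Finset.range k)
    simp only [Finset.card_product, Nat.card_Ico, Finset.card_range, Nat.add_sub_cancel_left]
      at h2 h3
    have : k * m = m * k := mul_comm _ _
    omega

lemma Ptot_lb (d m : ℕ) (hd : 2 ≤ d) :
    d * d ≤ 2 * Ptot (brG d m) d + 3 * d + 1 := by
  have h : (Finset.range d ×ˢ Finset.range d \ nearP d 1).card ≤
    (Finset.univ.filter (fun p : Fin (d + m) × Fin (d + m) =>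
    2 ≤ (brG d m).dist p.1 p.2 ∧ (brG d m).dist p.1 p.2 ≤ d)).card := by
    apply lb_aux
    · rintro ⟨i, j⟩ h
      simp only [Finset.mem_sdiff, Finset.mem_product, Finset.mem_range] at h
      simp only
      omega
    · intro i j h
      simp only [Finset.mem_sdiff, Finset.mem_product, Finset.mem_range] at h
      obtain ⟨⟨h1, h2⟩, h3⟩ := h
      have h4 : ¬ ((i : ℕ) ≤ j + 1 ∧ (j : ℕ) ≤ i + 1) :=
        fun h => h3 (mem_nearP d 1 i j h1 h.1 h.2)
      simp only [Finset.mem_filter, Finset.mem_univ, true_and, brG_dist d m hd]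
      unfold brD
      split_ifs <;> omega
  have h2 := Finset.le_card_sdiff (nearP d 1) (Finset.range d ×ˢ Finset.range d)
  have h3 := nearP_card d 1
  rw [Finset.card_product, Finset.card_range] at h2
  unfold Ptot
  omega

lemma Pvtx_ub (d m : ℕ) (hd : 2 ≤ d) (v : Fin (d + m)) (hv : (v : ℕ) = 0) :
    2 * Pvtx (brG d m) d v ≤ 2 * (m * (d + m)) := by
  unfold Pvtx
  refine (Nat.mul_div_le _ 2).trans ?_
  refine (ub_aux _ _ ((Finset.Ico d (d + m) ×ˢ Finset.range (d + m)) ∪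
    (Finset.range (d + m) ×ˢ Finset.Ico d (d + m))) ?_).trans ?_
  · rintro ⟨i, j⟩ h
    simp only [Finset.mem_filter, Finset.mem_univ, true_and, IsInterior, brG_dist d m hd, ne_eq,
      Fin.ext_iff, hv] at h
    have hi := i.2
    have hj := j.2
    simp only [Finset.mem_union, Finset.mem_product, Finset.mem_Ico, Finset.mem_range]
    unfold brD at h
    split_ifs at h <;> omega
  · refine (Finset.card_union_le _ _).trans ?_
    simp only [Finset.card_product, Nat.card_Ico, Finset.card_range, Nat.add_sub_cancel_left]
    have : (d + m) * m = m * (d + m) := mul_comm _ _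
    omega

lemma Pvtx_lb (d m k : ℕ) (hd : 2 ≤ d) (hk : 2 ≤ k) (v : Fin (d + m)) (hv : (v : ℕ) = 0) :
    m * m ≤ 2 * Pvtx (brG d m) k v + m + 1 := by
  have h : (Finset.Ico d (d + m)).offDiag.card ≤
    (Finset.univ.filter (fun p : Fin (d + m) × Fin (d + m) =>
    2 ≤ (brG d m).dist p.1 p.2 ∧ (brG d m).dist p.1 p.2 ≤ k ∧
      IsInterior (brG d m) v p.1 p.2)).card := by
    apply lb_aux
    · rintro ⟨i, j⟩ h
      simp only [Finset.mem_offDiag, Finset.mem_Ico] at h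
      simp only
      omega
    · intro i j h
      simp only [Finset.mem_offDiag, Finset.mem_Ico] at h
      simp only [Finset.mem_filter, Finset.mem_univ, true_and, IsInterior, brG_dist d m hd, ne_eq,
        Fin.ext_iff, hv]
      unfold brD
      split_ifs <;> omega
  rw [Finset.offDiag_card, Nat.card_Ico, Nat.add_sub_cancel_left] at h
  unfold Pvtx
  omega

lemma Pvtx_le_Ptot {V : Type*} [Fintype V] (G : SimpleGraph V) (k : ℕ) (v : V) :
    Pvtx G k v ≤ Ptot G k := by
  unfold Pvtx Ptot
  apply Nat.div_le_div_right
  apply Finset.card_le_card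
  intro p hp
  simp only [Finset.mem_filter] at *
  tauto

/-- `k`-betweenness centralities can be arbitrarily large relative to betweenness
centrality: for every `C > 0` there are `d₀` and `ε > 0` such that for every diameter
`d ≥ d₀` there are a tree of diameter `d` and a vertex `v` with
`BC_k(v) > C · BC_d(v)` for every `2 ≤ k ≤ ε·d`. -/
theorem BC_k_can_be_much_larger (C : ℝ) (hC : 0 < C) :
    ∃ (d₀ : ℕ) (ε : ℝ), 0 < ε ∧ ∀ d : ℕ, d₀ ≤ d →
      ∃ (N : ℕ) (G : SimpleGraph (Fin N)) (v : Fin N), G.IsTree ∧ diam G = d ∧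
        ∀ k : ℕ, 2 ≤ k → (k : ℝ) ≤ ε * (d : ℝ) → BC G k v > C * BC G d v := by
  obtain ⟨δ, hδ⟩ : ∃ δ : ℝ, δ = 1 / (64 * (C + 1)) := ⟨_, rfl⟩
  have hδ0 : 0 < δ := by rw [hδ]; positivity
  have hδC : δ * C + δ = 1 / 64 := by rw [hδ]; field_simp
  refine ⟨⌈6 / δ⌉₊ + 10, δ ^ 2 / 20, by positivity, ?_⟩
  intro d hd
  have hd10 : 10 ≤ d := by omega
  have hdR : (10 : ℝ) ≤ d := by exact_mod_cast hd10
  have hδd : 6 ≤ δ * d := by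
    have h1 : 6 / δ ≤ d := (Nat.le_ceil _).trans (by exact_mod_cast (by omega))
    rw [div_le_iff₀ hδ0] at h1
    linarith
  obtain ⟨m, hm⟩ : ∃ m : ℕ, m = ⌊δ * d⌋₊ := ⟨_, rfl⟩
  have hm1 : (m : ℝ) ≤ δ * d := by rw [hm]; exact Nat.floor_le (by positivity)
  have hm2 : δ * d < m + 1 := by rw [hm]; exact Nat.lt_floor_add_one _
  have hm5 : (5 : ℝ) < m := by linarith
  have hm5' : 5 < m := by exact_mod_cast hm5
  have hmd : (m : ℝ) ≤ d := by nlinarith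
  have hmC : C * m ≤ d / 64 := by nlinarith
  refine ⟨d + m, brG d m, ⟨0, by omega⟩, brG_tree d m (by omega),
    brG_diam d m (by omega) (by omega), ?_⟩
  intro k hk hkε
  obtain ⟨v, hv⟩ : ∃ v : Fin (d + m), v = ⟨0, by omega⟩ := ⟨_, rfl⟩
  rw [← hv]
  have hv0 : (v : ℕ) = 0 := by rw [hv]
  have e1 := Ptot_ub d m k (by omega)
  have e2 := Ptot_lb d m (by omega)
  have e3 := Pvtx_ub d m (by omega) v hv0
  have e4 := Pvtx_lb d m k (by omega) hk v hv0
  have e5 := Pvtx_le_Ptot (brG d m) k v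
  unfold BC
  generalize Ptot (brG d m) k = A at *
  generalize Ptot (brG d m) d = B at *
  generalize Pvtx (brG d m) d v = X at *
  generalize Pvtx (brG d m) k v = Y at *
  have hkR : (2 : ℝ) ≤ k := by exact_mod_cast hk
  have f1 : 2 * (A : ℝ) ≤ m * m + 2 * (m * k) + d * (2 * k + 1) := by exact_mod_cast e1
  have f2 : (d : ℝ) * d ≤ 2 * B + 3 * d + 1 := by exact_mod_cast e2
  have f3 : 2 * (X : ℝ) ≤ 2 * (m * (d + m)) := by exact_mod_cast e3
  have f4 : (m : ℝ) * m ≤ 2 * Y + m + 1 := by exact_mod_cast e4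
  have f5 : (Y : ℝ) ≤ A := by exact_mod_cast e5
  have q1 : 5 * (m : ℝ) ≤ m * m := by gcongr
  have q2 : 10 * (d : ℝ) ≤ d * d := by gcongr
  have q3 : (m : ℝ) * m ≤ m * d := by gcongr
  have gY : (m : ℝ) * m / 4 ≤ Y := by linarith
  have gB : (d : ℝ) * d / 4 ≤ B := by linarith
  have gX : (X : ℝ) ≤ 2 * m * d := by linarith
  have hY0 : (0 : ℝ) < Y := by linarith
  have hA0 : (0 : ℝ) < A := by linarith
  have hB0 : (0 : ℝ) < B := by linarith
  have hdk : (d : ℝ) * k ≤ (δ * d) ^ 2 / 20 := by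
    calc (d : ℝ) * k ≤ d * (δ ^ 2 / 20 * d) := by gcongr
      _ = _ := by ring
  have hmm : (δ * d) ^ 2 ≤ 4 * (m * m) := by
    have : δ * d ≤ 2 * m := by linarith
    calc (δ * d) ^ 2 ≤ (2 * (m : ℝ)) ^ 2 := by gcongr
      _ = _ := by ring
  have gA : (A : ℝ) ≤ m * m := by
    have : (m : ℝ) * k ≤ d * k := by gcongr
    have : (d : ℝ) ≤ d * k := le_mul_of_one_le_right (by linarith) (by linarith)
    linarith
  have r1 : (1 : ℝ) / 4 ≤ Y / A := by
    rw [le_div_iff₀ hA0]; linarith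
  have r2 : C * (X / B) < 1 / 4 := by
    rw [← mul_div_assoc, div_lt_iff₀ hB0]
    have : C * X ≤ C * (2 * m * d) := by gcongr
    have : C * m * d ≤ d / 64 * d := by gcongr
    have : (0 : ℝ) < d * d := by linarith
    linarith
  linarith
end

section
/- In the path graph of length n (n ≥ 2), for every vertex i and every integer k with 2 ≤ k < n, BC_k(i) ≤ BC_{k+1}(i); that is, the profile of every vertex of a simple path is monotonically non-decreasing in k. -/
/-- `pathPk n k i` : number of pairs `(s,t)` with `0 ≤ s < t ≤ n`, `2 ≤ t - s ≤ k`,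
and `s < i < t`, i.e. the number of paths of length between 2 and `k` in the path graph
of length `n` containing the vertex `i` as an interior vertex. -/
def pathPk (n k i : ℕ) : ℕ :=
  ((Finset.range (n+1) ×ˢ Finset.range (n+1)).filter
    (fun p => p.1 < p.2 ∧ 2 ≤ p.2 - p.1 ∧ p.2 - p.1 ≤ k ∧ p.1 < i ∧ i < p.2)).card

/-- `pathPtot n k` : number of pairs `(s,t)` with `0 ≤ s < t ≤ n` and `2 ≤ t - s ≤ k`. -/
def pathPtot (n k : ℕ) : ℕ :=
  ((Finset.range (n+1) ×ˢ Finset.range (n+1)).filter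
    (fun p => p.1 < p.2 ∧ 2 ≤ p.2 - p.1 ∧ p.2 - p.1 ≤ k)).card

/-- The normalized `k`-betweenness centrality of vertex `i` in the path graph of length `n`. -/
noncomputable def pathBC (n k i : ℕ) : ℝ :=
  (pathPk n k i : ℝ) / (pathPtot n k : ℝ)

theorem aux_card_step (n k : ℕ) (P Q : ℕ × ℕ → Prop) [DecidablePred P] [DecidablePred Q]
    (l u : ℕ)
    (hP : ∀ s t, Q (s, t) ∧ s < n + 1 ∧ t < n + 1 ↔
      (P (s, t) ∧ s < n + 1 ∧ t < n + 1) ∨ (l ≤ s ∧ s < u ∧ t = s + (k + 1)))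
    (hd : ∀ s, ¬ P (s, s + (k + 1))) :
    ((Finset.range (n+1) ×ˢ Finset.range (n+1)).filter Q).card
      = ((Finset.range (n+1) ×ˢ Finset.range (n+1)).filter P).card + (u - l) := by
  have h1 : (Finset.range (n+1) ×ˢ Finset.range (n+1)).filter Q
      = (Finset.range (n+1) ×ˢ Finset.range (n+1)).filter P ∪
        (Finset.Ico l u).image (fun s => (s, s + (k + 1))) := by
    ext ⟨s, t⟩
    have := hP s t
    simp only [Finset.mem_filter, Finset.mem_product, Finset.mem_range, Finset.mem_union,
      Finset.mem_image, Finset.mem_Ico, Prod.mk.injEq]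
    constructor
    · rintro ⟨h, hq⟩
      rcases this.1 ⟨hq, h⟩ with h' | h'
      · exact Or.inl ⟨h'.2, h'.1⟩
      · exact Or.inr ⟨s, ⟨h'.1, h'.2.1⟩, rfl, h'.2.2.symm⟩
    · rintro (⟨h, hp⟩ | ⟨a, ⟨ha, hb⟩, rfl, rfl⟩)
      · have := this.2 (Or.inl ⟨hp, h⟩)
        exact ⟨this.2, this.1⟩
      · have := this.2 (Or.inr ⟨ha, hb, rfl⟩)
        exact ⟨this.2, this.1⟩
  rw [h1, Finset.card_union_of_disjoint, Finset.card_image_of_injective, Nat.card_Ico]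
  · intro a b hab
    exact (Prod.mk.inj hab).1
  · rw [Finset.disjoint_left]
    rintro ⟨s, t⟩ h h'
    simp only [Finset.mem_image, Prod.mk.injEq] at h'
    obtain ⟨a, _, rfl, rfl⟩ := h'
    exact hd a (Finset.mem_filter.1 h).2

theorem pathPk_step (n k i : ℕ) (hk : 1 ≤ k) :
    pathPk n (k+1) i = pathPk n k i + (min i (n - k) - (i - k)) := by
  unfold pathPk
  apply aux_card_step n k _ _
  · intro s t
    dsimp only
    omega
  · intro s
    dsimp only
    omega

theorem pathPtot_step (n k : ℕ) (hk : 1 ≤ k) :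
    pathPtot n (k+1) = pathPtot n k + (n - k) := by
  unfold pathPtot
  apply aux_card_step n k _ _ 0 (n - k)
  · intro s t
    dsimp only
    omega
  · intro s
    dsimp only
    omega

theorem ratio_step (n k i : ℕ) (hi : i ≤ n) (hk : k + 1 < n) :
    (min i (n - k) - (i - k)) * (n - (k + 1))
      ≤ (min i (n - (k + 1)) - (i - (k + 1))) * (n - k) := by
  by_cases h : min i (n - k) - (i - k) ≤ min i (n - (k + 1)) - (i - (k + 1))
  · exact Nat.mul_le_mul h (by omega)
  · have h2 : min i (n - (k + 1)) - (i - (k + 1)) = n - (k + 1) := by omega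
    rw [h2, mul_comm]
    exact Nat.mul_le_mul_left _ (by omega)

theorem main_ineq (n i : ℕ) (hi : i ≤ n) (k : ℕ) (hk : 1 ≤ k) : k < n →
    pathPk n k i * (n - k) ≤ (min i (n - k) - (i - k)) * pathPtot n k := by
  induction k, hk using Nat.le_induction with
  | base =>
    intro _
    have : pathPk n 1 i = 0 := by
      unfold pathPk
      rw [Finset.card_eq_zero, Finset.filter_eq_empty_iff]
      intro p _
      omega
    simp [this]
  | succ k hk ih =>
    intro h
    have ih := ih (by omega)
    have hr := ratio_step n k i hi h
    rw [pathPk_step n k i hk, pathPtot_step n k hk]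
    have hT : 0 < n - k := by omega
    generalize min i (n - k) - (i - k) = a at *
    generalize min i (n - (k + 1)) - (i - (k + 1)) = b at *
    generalize n - (k + 1) = U at *
    generalize n - k = T at *
    generalize pathPk n k i = P at *
    generalize pathPtot n k = Q at *
    have h3 : P * U ≤ b * Q := by
      refine Nat.le_of_mul_le_mul_left ?_ hT
      calc T * (P * U) = (P * T) * U := by ring
        _ ≤ (a * Q) * U := Nat.mul_le_mul_right _ ih
        _ = (a * U) * Q := by ring
        _ ≤ (b * T) * Q := Nat.mul_le_mul_right _ hr
        _ = T * (b * Q) := by ring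
    rw [add_mul, mul_add]
    exact add_le_add h3 hr

/-- In the path graph of length `n ≥ 2`, the profile of every vertex is monotonically
non-decreasing in `k`. -/
theorem path_profile_monotone (n i k : ℕ) (hn : 2 ≤ n) (hi : i ≤ n)
    (hk : 2 ≤ k) (hkn : k < n) :
    pathBC n k i ≤ pathBC n (k+1) i := by
  have hm := main_ineq n i hi k (by omega) hkn
  have hpos : 0 < pathPtot n k := by
    unfold pathPtot
    apply Finset.card_pos.2
    refine ⟨(0, 2), ?_⟩
    simp only [Finset.mem_filter, Finset.mem_product, Finset.mem_range]
    omega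
  unfold pathBC
  rw [pathPk_step n k i (by omega), pathPtot_step n k (by omega)]
  rw [div_le_div_iff₀ (by exact_mod_cast hpos) (by exact_mod_cast Nat.add_pos_left hpos _)]
  norm_cast
  rw [mul_add, add_mul]
  exact Nat.add_le_add_left hm _
end

section
/- In the path graph of length n (n ≥ 2), profiles of vertices do not cross: for any two vertices u and v, either BC_k(u) ≤ BC_k(v) for all integers k with 2 ≤ k ≤ n, or BC_k(v) ≤ BC_k(u) for all integers k with 2 ≤ k ≤ n. -/
theorem pathPk_le_left (n k u v : ℕ) (h : u ≤ v) (huv : u + v ≤ n) :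
    pathPk n k u ≤ pathPk n k v := by
  unfold pathPk
  apply Finset.card_le_card_of_injOn
    (fun p => if v < p.2 then p else (u + v - p.2, u + v - p.1))
  · rintro ⟨s, t⟩ hp
    simp only [Finset.coe_filter, Finset.mem_product, Finset.mem_range, Set.mem_setOf_eq] at hp ⊢
    split_ifs <;> simp only [] at * <;> omega
  · rintro ⟨s, t⟩ hp ⟨s', t'⟩ hq he
    simp only [Finset.coe_filter, Finset.mem_product, Finset.mem_range, Set.mem_setOf_eq] at hp hq he
    split_ifs at he <;> simp only [Prod.mk.injEq] at he ⊢ <;> omega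

theorem pathPk_le_right (n k u v : ℕ) (h : u ≤ v) (huv : n ≤ u + v) :
    pathPk n k v ≤ pathPk n k u := by
  unfold pathPk
  apply Finset.card_le_card_of_injOn
    (fun p => if p.1 < u then p else (u + v - p.2, u + v - p.1))
  · rintro ⟨s, t⟩ hp
    simp only [Finset.coe_filter, Finset.mem_product, Finset.mem_range, Set.mem_setOf_eq] at hp ⊢
    split_ifs <;> simp only [] at * <;> omega
  · rintro ⟨s, t⟩ hp ⟨s', t'⟩ hq he
    simp only [Finset.coe_filter, Finset.mem_product, Finset.mem_range, Set.mem_setOf_eq] at hp hq he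
    split_ifs at he <;> simp only [Prod.mk.injEq] at he ⊢ <;> omega

theorem pathBC_le (n k u v : ℕ) (h : pathPk n k u ≤ pathPk n k v) :
    pathBC n k u ≤ pathBC n k v := by
  unfold pathBC
  gcongr

/-- In the path graph of length `n ≥ 2`, profiles of vertices do not cross. -/
theorem path_profiles_do_not_cross (n u v : ℕ) (hn : 2 ≤ n) (hu : u ≤ n) (hv : v ≤ n) :
    (∀ k : ℕ, 2 ≤ k → k ≤ n → pathBC n k u ≤ pathBC n k v) ∨
    (∀ k : ℕ, 2 ≤ k → k ≤ n → pathBC n k v ≤ pathBC n k u) := by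
  rcases le_total u v with h | h <;> rcases le_total (u + v) n with h2 | h2
  · exact Or.inl fun k _ _ => pathBC_le _ _ _ _ (pathPk_le_left n k u v h h2)
  · exact Or.inr fun k _ _ => pathBC_le _ _ _ _ (pathPk_le_right n k u v h h2)
  · exact Or.inr fun k _ _ => pathBC_le _ _ _ _ (pathPk_le_left n k v u h (by omega))
  · exact Or.inl fun k _ _ => pathBC_le _ _ _ _ (pathPk_le_right n k v u h (by omega))
end

section
/- In the path graph of length n, for every vertex i with 0 ≤ i ≤ ⌊n/2⌋ and every integer k with 2 ≤ k ≤ n, the number P_k(i) of pairs (s,t) with 0 ≤ s < t ≤ n, 2 ≤ t − s ≤ k, and s < i < t equals: C(k,2) if k ≤ i; C(i,2) + i(k − i) if i < k ≤ n + 1 − i; and C(i,2) + i(n − 2i + 1) + (n + 1)(k − n + i − 1) + C(n + 2 − i, 2) − C(k + 1, 2) if k > n + 1 − i. (Here C(m,2) = m(m−1)/2.) -/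
theorem pathPk_succ (n k i : ℕ) :
    pathPk n (k+1) i = pathPk n k i + (min i (n-k) - (i-k)) := by
  have hc : (min i (n-k) - (i-k)) =
      ((Finset.Ico (i-k) (min i (n-k))).image (fun s => (s, s+k+1))).card := by
    rw [Finset.card_image_of_injective, Nat.card_Ico]
    intro a b h
    exact (Prod.mk.inj h).1
  rw [hc]
  unfold pathPk
  rw [← Finset.card_union_of_disjoint]
  · congr 1
    ext ⟨s, t⟩
    simp only [Finset.mem_filter, Finset.mem_product, Finset.mem_range, Finset.mem_union,
      Finset.mem_image, Finset.mem_Ico, Prod.mk.injEq]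
    constructor
    · intro h
      by_cases hd : t - s ≤ k
      · left; omega
      · right; exact ⟨s, by omega, rfl, by omega⟩
    · rintro (h | ⟨a, h, rfl, rfl⟩) <;> omega
  · rw [Finset.disjoint_left]
    rintro ⟨s, t⟩
    simp only [Finset.mem_filter, Finset.mem_product, Finset.mem_range,
      Finset.mem_image, Finset.mem_Ico, Prod.mk.injEq]
    rintro h ⟨a, h, rfl, rfl⟩
    omega

theorem pathPk_zero (n i : ℕ) : pathPk n 0 i = 0 := by
  unfold pathPk
  rw [Finset.card_eq_zero, Finset.filter_eq_empty_iff]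
  intro p _ h
  omega

theorem pathPk_A (n i k : ℕ) (hi : i ≤ n / 2) (h : k ≤ i) : pathPk n k i = k.choose 2 := by
  induction k with
  | zero => simp [pathPk_zero]
  | succ k ih =>
    have h1 : (k+1).choose 2 = k + k.choose 2 := by
      rw [Nat.choose_succ_succ' k 1, Nat.choose_one_right]
    rw [pathPk_succ, ih (by omega), h1]
    omega

theorem pathPk_B (n i m : ℕ) (hi : i ≤ n / 2) (h : i + m ≤ n + 1 - i) :
    pathPk n (i + m) i = i.choose 2 + i * m := by
  induction m with
  | zero => simp [pathPk_A n i i hi le_rfl]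
  | succ m ih =>
    rw [← add_assoc, pathPk_succ, ih (by omega), Nat.mul_succ]
    omega

theorem pathPk_C (n i m : ℕ) (hi : i ≤ n / 2) (h : n + 1 - i + m ≤ n + 1) :
    (pathPk n (n + 1 - i + m) i : ℤ) = (i.choose 2 : ℤ) + (i : ℤ) * ((n : ℤ) - 2*(i : ℤ) + 1)
        + ((n : ℤ) + 1) * (m : ℤ)
        + ((n + 2 - i).choose 2 : ℤ) - ((n + 1 - i + m + 1).choose 2 : ℤ) := by
  induction m with
  | zero =>
    have h0 := pathPk_B n i (n + 1 - i - i) hi (by omega)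
    rw [show i + (n + 1 - i - i) = n + 1 - i + 0 by omega] at h0
    rw [h0, show n + 1 - i + 0 + 1 = n + 2 - i by omega]
    push_cast [show i ≤ n + 1 - i by omega, show i ≤ n + 1 by omega]
    ring
  | succ m ih =>
    have h1 : (n + 1 - i + m + 1 + 1).choose 2
        = (n + 1 - i + m + 1) + (n + 1 - i + m + 1).choose 2 := by
      rw [Nat.choose_succ_succ' _ 1, Nat.choose_one_right]
    have h2 : ((min i (n-(n + 1 - i + m)) - (i-(n + 1 - i + m)) : ℕ) : ℤ)
        = (n : ℤ) + 1 - ((n + 1 - i + m + 1 : ℕ) : ℤ) := by omega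
    rw [← add_assoc, pathPk_succ, h1, Nat.cast_add, ih (by omega), h2]
    push_cast
    ring

/-- Closed form for `pathPk` in the path graph of length `n`, for `0 ≤ i ≤ ⌊n/2⌋` and
`2 ≤ k ≤ n`. -/
theorem pathPk_formula (n i k : ℕ) (hi : i ≤ n / 2) (hk2 : 2 ≤ k) (hkn : k ≤ n) :
    (k ≤ i → (pathPk n k i : ℤ) = (k.choose 2 : ℤ)) ∧
    (i < k → k ≤ n + 1 - i →
      (pathPk n k i : ℤ) = (i.choose 2 : ℤ) + (i : ℤ) * ((k : ℤ) - (i : ℤ))) ∧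
    (n + 1 - i < k →
      (pathPk n k i : ℤ) = (i.choose 2 : ℤ) + (i : ℤ) * ((n : ℤ) - 2*(i : ℤ) + 1)
        + ((n : ℤ) + 1) * ((k : ℤ) - (n : ℤ) + (i : ℤ) - 1)
        + ((n + 2 - i).choose 2 : ℤ) - ((k+1).choose 2 : ℤ)) := by
  refine ⟨fun h => ?_, fun h1 h2 => ?_, fun h => ?_⟩
  · rw [pathPk_A n i k hi h]
  · obtain ⟨m, rfl⟩ := Nat.exists_eq_add_of_le h1.le
    rw [pathPk_B n i m hi h2]
    push_cast
    ring
  · obtain ⟨m, rfl⟩ := Nat.exists_eq_add_of_le h.le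
    rw [pathPk_C n i m hi (by omega),
      show ((n + 1 - i + m : ℕ) : ℤ) - (n : ℤ) + (i : ℤ) - 1 = m by omega]
end

section
/- Let i ≥ 3, j ≥ 5, and let v = c_1 in the tree G_{i,j}. Then for every integer r with 2 ≤ r ≤ i−1: P_{r(j+1)+2}(v) = r(3j+1) + 1, P_{r(j+1)+3}(v) = r(3j+1) + 2, and P_{r(j+1)+4}(v) = r(3j+1) + 5. -/
open scoped Classical

/-- Vertex type of the tree `G_{i,j}`: the central path `c_0, …, c_{i(j+1)+2}`
(encoded as `Sum.inl`), plus `2i` branches of length `j` (encoded as `Sum.inr (r, side, p)`,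
the vertex at distance `p + 1` along branch `side` attached at `c_{r(j+1)+3}`). -/
abbrev GijVertex (i j : ℕ) : Type := Fin (i*(j+1)+3) ⊕ (Fin i × Bool × Fin j)

/-- The base relation generating the edges of `G_{i,j}`. -/
def GijRel (i j : ℕ) : GijVertex i j → GijVertex i j → Prop
  | Sum.inl a, Sum.inl b => a.val + 1 = b.val
  | Sum.inl a, Sum.inr (r, _, p) => p.val = 0 ∧ a.val = r.val * (j+1) + 3
  | Sum.inr (r, s, p), Sum.inr (r', s', p') => r = r' ∧ s = s' ∧ p.val + 1 = p'.val
  | _, _ => False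

/-- The tree `G_{i,j}`: a central path of length `i(j+1)+2`, with two disjoint branches
(paths) of length `j` attached at the central vertex `c_{r(j+1)+3}` for each
`r = 0, 1, …, i-1`. -/
def Gij (i j : ℕ) : SimpleGraph (GijVertex i j) := SimpleGraph.fromRel (GijRel i j)

/-- The central-path vertex `c_a` of `G_{i,j}`. -/
def Gijc (i j a : ℕ) (h : a < i*(j+1)+3) : GijVertex i j := Sum.inl ⟨a, h⟩


def gdepth (i j : ℕ) : GijVertex i j → ℕ
  | Sum.inl a => a.val
  | Sum.inr (r, _, p) => r.val * (j+1) + 4 + p.val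

lemma gdepth_adj (i j : ℕ) (s t : GijVertex i j) (h : (Gij i j).Adj s t) :
    gdepth i j t ≤ gdepth i j s + 1 := by
  rw [Gij, SimpleGraph.fromRel_adj] at h
  obtain ⟨_, h⟩ := h
  rcases s with a | ⟨r, b, p⟩ <;> rcases t with a' | ⟨r', b', p'⟩ <;>
    simp only [GijRel, gdepth, or_false, false_or] at h ⊢
  · omega
  · omega
  · omega
  · rcases h with ⟨h1, _, h2⟩ | ⟨h1, _, h2⟩ <;> subst h1 <;> omega

lemma gdepth_walk (i j : ℕ) (s t : GijVertex i j) (w : (Gij i j).Walk s t) :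
    gdepth i j t ≤ gdepth i j s + w.length := by
  induction w with
  | nil => simp
  | cons h p ih =>
    have := gdepth_adj i j _ _ h
    simp only [SimpleGraph.Walk.length_cons]
    omega

lemma gdepth_pred (i j : ℕ) (t : GijVertex i j) (d : ℕ) (h : gdepth i j t = d + 1) :
    ∃ s, gdepth i j s = d ∧ (Gij i j).Adj s t := by
  rcases t with a | ⟨r, b, p⟩
  · simp only [gdepth] at h
    refine ⟨Sum.inl ⟨d, by have := a.2; omega⟩, rfl, ?_⟩
    rw [Gij, SimpleGraph.fromRel_adj]
    refine ⟨?_, Or.inl ?_⟩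
    · intro hh
      have := congrArg (gdepth i j) hh
      simp only [gdepth] at this
      omega
    · simp only [GijRel]; omega
  · simp only [gdepth] at h
    by_cases hp : p.val = 0
    · have hr := r.2
      have : (r.val + 1) * (j+1) ≤ i * (j+1) := Nat.mul_le_mul_right _ hr
      have e : (r.val + 1) * (j+1) = r.val * (j+1) + (j + 1) := by ring
      refine ⟨Sum.inl ⟨d, by omega⟩, rfl, ?_⟩
      rw [Gij, SimpleGraph.fromRel_adj]
      refine ⟨by simp, Or.inl ?_⟩
      simp only [GijRel]; omega
    · refine ⟨Sum.inr (r, b, ⟨p.val - 1, by omega⟩), by simp only [gdepth]; omega, ?_⟩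
      rw [Gij, SimpleGraph.fromRel_adj]
      refine ⟨?_, Or.inl ?_⟩
      · intro hh
        have := congrArg (gdepth i j) hh
        simp only [gdepth] at this
        omega
      · simp only [GijRel, true_and]; omega

lemma gdepth_unique (i j m : ℕ) (hm : m ≤ 3) (h : m < i*(j+1)+3) (t : GijVertex i j)
    (ht : gdepth i j t = m) : t = Gijc i j m h := by
  rcases t with a | ⟨r, b, p⟩
  · simp only [gdepth] at ht
    simp only [Gijc]; congr 1; ext; exact ht
  · simp only [gdepth] at ht; omega

lemma gwalk (i j m : ℕ) (hm : m ≤ 3) (h : m < i*(j+1)+3) (n : ℕ) : ∀ t : GijVertex i j,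
    gdepth i j t = m + n → ∃ w : (Gij i j).Walk (Gijc i j m h) t, w.length = n := by
  induction n with
  | zero =>
    intro t ht
    obtain rfl := gdepth_unique i j m hm h t ht
    exact ⟨SimpleGraph.Walk.nil, rfl⟩
  | succ n ih =>
    intro t ht
    obtain ⟨s, hs, ha⟩ := gdepth_pred i j t (m + n) ht
    obtain ⟨w, hw⟩ := ih s hs
    exact ⟨w.concat ha, by simp [hw]⟩

lemma gconn (i j : ℕ) : (Gij i j).Connected := by
  have h0 : 0 < i*(j+1)+3 := by omega
  have key : ∀ t, (Gij i j).Reachable (Gijc i j 0 h0) t := fun t => by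
    obtain ⟨w, _⟩ := gwalk i j 0 (by omega) h0 (gdepth i j t) t (by omega)
    exact ⟨w⟩
  have : Nonempty (GijVertex i j) := ⟨Gijc i j 0 h0⟩
  exact ⟨fun s t => (key s).symm.trans (key t)⟩

lemma gdist (i j m : ℕ) (hm : m ≤ 3) (h : m < i*(j+1)+3) (t : GijVertex i j)
    (ht : m ≤ gdepth i j t) : (Gij i j).dist (Gijc i j m h) t = gdepth i j t - m := by
  obtain ⟨w, hw⟩ := gwalk i j m hm h (gdepth i j t - m) t (by omega)
  have h1 := SimpleGraph.dist_le w
  obtain ⟨w', hw'⟩ := (gconn i j).exists_walk_length_eq_dist (Gijc i j m h) t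
  have h2 := gdepth_walk i j _ _ w'
  have h3 : gdepth i j (Gijc i j m h) = m := rfl
  omega

lemma gcond (i j k : ℕ) (h0 : 0 < i*(j+1)+3) (h1 : 1 < i*(j+1)+3) (s t : GijVertex i j) :
    (2 ≤ (Gij i j).dist s t ∧ (Gij i j).dist s t ≤ k ∧ IsInterior (Gij i j) (Gijc i j 1 h1) s t)
    ↔ (s = Gijc i j 0 h0 ∧ 2 ≤ gdepth i j t ∧ gdepth i j t ≤ k) ∨
      (t = Gijc i j 0 h0 ∧ 2 ≤ gdepth i j s ∧ gdepth i j s ≤ k) := by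
  have h2 : 2 < i*(j+1)+3 := by omega
  have main : ∀ t, 2 ≤ gdepth i j t → gdepth i j t ≤ k →
      2 ≤ (Gij i j).dist (Gijc i j 0 h0) t ∧ (Gij i j).dist (Gijc i j 0 h0) t ≤ k ∧
      IsInterior (Gij i j) (Gijc i j 1 h1) (Gijc i j 0 h0) t := by
    intro t ht hk
    have e0 := gdist i j 0 (by omega) h0 t (by omega)
    have e1 := gdist i j 1 (by omega) h1 t (by omega)
    have e2 := gdist i j 0 (by omega) h0 (Gijc i j 1 h1) (by omega)
    have e3 : gdepth i j (Gijc i j 1 h1) = 1 := rfl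
    have e4 : gdepth i j (Gijc i j 0 h0) = 0 := rfl
    refine ⟨by omega, by omega, ?_, ?_, by omega⟩
    · intro h; rw [h] at e3; omega
    · rintro rfl; omega
  constructor
  · rintro ⟨ha, hb, hc, hd, he⟩
    have ne1 : ∀ u, Gijc i j 1 h1 ≠ u → gdepth i j u ≠ 1 := fun u hu hh =>
      hu (gdepth_unique i j 1 (by omega) h1 u hh).symm
    have hs := ne1 s hc
    have ht := ne1 t hd
    by_cases s0 : gdepth i j s = 0
    · have := gdepth_unique i j 0 (by omega) h0 s s0
      subst this
      rw [gdist i j 0 (by omega) h0 t (by omega)] at ha hb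
      left; exact ⟨rfl, by omega, by omega⟩
    by_cases t0 : gdepth i j t = 0
    · have := gdepth_unique i j 0 (by omega) h0 t t0
      subst this
      rw [SimpleGraph.dist_comm, gdist i j 0 (by omega) h0 s (by omega)] at ha hb
      right; exact ⟨rfl, by omega, by omega⟩
    exfalso
    have tri := (gconn i j).dist_triangle (u := s) (v := Gijc i j 2 h2) (w := t)
    rw [SimpleGraph.dist_comm (u := s) (v := Gijc i j 2 h2)] at tri
    rw [SimpleGraph.dist_comm (u := s) (v := Gijc i j 1 h1)] at he
    rw [gdist i j 2 (by omega) h2 s (by omega), gdist i j 2 (by omega) h2 t (by omega)] at tri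
    rw [gdist i j 1 (by omega) h1 s (by omega), gdist i j 1 (by omega) h1 t (by omega)] at he
    omega
  · rintro (⟨rfl, h⟩ | ⟨rfl, h⟩)
    · exact main t h.1 h.2
    · obtain ⟨a, b, c, d, e⟩ := main s h.1 h.2
      rw [SimpleGraph.dist_comm]
      refine ⟨a, b, d, c, ?_⟩
      rw [SimpleGraph.dist_comm (u := s), SimpleGraph.dist_comm (u := s),
        SimpleGraph.dist_comm (v := Gijc i j 0 h0)]
      omega

lemma gPvtx (i j k : ℕ) (h1 : 1 < i*(j+1)+3) :
    Pvtx (Gij i j) k (Gijc i j 1 h1) =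
      (Finset.univ.filter (fun t : GijVertex i j => 2 ≤ gdepth i j t ∧ gdepth i j t ≤ k)).card := by
  have h0 : 0 < i*(j+1)+3 := by omega
  unfold Pvtx
  set T := Finset.univ.filter (fun t : GijVertex i j => 2 ≤ gdepth i j t ∧ gdepth i j t ≤ k) with hT
  have e : (Finset.univ.filter (fun p : GijVertex i j × GijVertex i j =>
    2 ≤ (Gij i j).dist p.1 p.2 ∧ (Gij i j).dist p.1 p.2 ≤ k ∧
      IsInterior (Gij i j) (Gijc i j 1 h1) p.1 p.2)) =
      ({Gijc i j 0 h0} ×ˢ T) ∪ (T ×ˢ {Gijc i j 0 h0}) := by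
    ext ⟨s, t⟩
    simp only [Finset.mem_filter, Finset.mem_univ, true_and, Finset.mem_union, Finset.mem_product,
      Finset.mem_singleton, hT, gcond i j k h0 h1]
    tauto
  rw [e, Finset.card_union_of_disjoint, Finset.card_product, Finset.card_product,
    Finset.card_singleton]
  · omega
  · rw [Finset.disjoint_left]
    rintro ⟨s, t⟩ ha hb
    simp only [Finset.mem_filter, Finset.mem_univ, true_and, Finset.mem_product,
      Finset.mem_singleton, hT] at ha hb
    have e4 : gdepth i j (Gijc i j 0 h0) = 0 := rfl
    rw [hb.2] at ha
    omega

lemma gcount (i j k : ℕ) (hk : k < i*(j+1)+3) :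
    (Finset.univ.filter (fun t : GijVertex i j => 2 ≤ gdepth i j t ∧ gdepth i j t ≤ k)).card =
    (k - 1) + (Finset.univ.filter (fun t : Fin i × Bool × Fin j =>
      t.1.val * (j+1) + 4 + t.2.2.val ≤ k)).card := by
  rw [Finset.card_filter, Fintype.sum_sum_type, ← Finset.card_filter, ← Finset.card_filter]
  congr 1
  · have : (Finset.univ.filter (fun a : Fin (i*(j+1)+3) =>
        2 ≤ gdepth i j (Sum.inl a) ∧ gdepth i j (Sum.inl a) ≤ k)).map Fin.valEmbedding
        = Finset.Icc 2 k := by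
      ext x
      simp only [Finset.mem_map, Finset.mem_filter, Finset.mem_univ, true_and,
        Finset.mem_Icc, Fin.valEmbedding_apply]
      constructor
      · rintro ⟨a, h, rfl⟩; exact h
      · intro h; exact ⟨⟨x, by omega⟩, h, rfl⟩
    rw [← Finset.card_map, this, Nat.card_Icc]; omega
  · congr 1
    ext ⟨r, b, p⟩
    simp only [Finset.mem_filter, Finset.mem_univ, true_and]
    simp only [gdepth]
    omega

lemma glt (i r : ℕ) (h : r ≤ i) : (Finset.univ.filter (fun a : Fin i => a.val < r)).card = r := by
  have : (Finset.univ.filter (fun a : Fin i => a.val < r)).map Fin.valEmbedding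
        = Finset.range r := by
    ext x
    simp only [Finset.mem_map, Finset.mem_filter, Finset.mem_univ, true_and,
        Finset.mem_range, Fin.valEmbedding_apply]
    constructor
    · rintro ⟨a, h, rfl⟩; exact h
    · intro h; exact ⟨⟨x, by omega⟩, h, rfl⟩
  rw [← Finset.card_map, this, Finset.card_range]

lemma garith (j a r p : ℕ) (hp : p < j) (e : ℕ) (he : e ≤ 4) (he2 : 2 ≤ e) :
    a * (j+1) + 4 + p ≤ r * (j+1) + e ↔ a < r ∨ (a = r ∧ p = 0 ∧ e = 4) := by
  rcases lt_trichotomy a r with h | h | h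
  · have : (a + 1) * (j+1) ≤ r * (j+1) := Nat.mul_le_mul_right _ h
    have e : (a + 1) * (j+1) = a * (j+1) + (j + 1) := by ring
    constructor <;> intro <;> omega
  · subst h; omega
  · have : (r + 1) * (j+1) ≤ a * (j+1) := Nat.mul_le_mul_right _ h
    have e : (r + 1) * (j+1) = r * (j+1) + (j + 1) := by ring
    constructor <;> intro <;> omega

lemma gbranch (i j r e : ℕ) (hr : r ≤ i) (he : e ≤ 3) (he2 : 2 ≤ e) :
    (Finset.univ.filter (fun t : Fin i × Bool × Fin j =>
      t.1.val * (j+1) + 4 + t.2.2.val ≤ r * (j+1) + e)).card = r * (2 * j) := by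
  have : (Finset.univ.filter (fun t : Fin i × Bool × Fin j =>
      t.1.val * (j+1) + 4 + t.2.2.val ≤ r * (j+1) + e)) =
      (Finset.univ.filter (fun a : Fin i => a.val < r)) ×ˢ Finset.univ := by
    ext ⟨a, b, p⟩
    simp only [Finset.mem_filter, Finset.mem_univ, true_and, Finset.mem_product, and_true]
    rw [garith j a r p p.2 e (by omega) he2]
    omega
  rw [this, Finset.card_product, glt i r hr]
  simp

lemma gbranch4 (i j r : ℕ) (hr : r < i) (hj : 0 < j) :
    (Finset.univ.filter (fun t : Fin i × Bool × Fin j =>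
      t.1.val * (j+1) + 4 + t.2.2.val ≤ r * (j+1) + 4)).card = r * (2 * j) + 2 := by
  have : (Finset.univ.filter (fun t : Fin i × Bool × Fin j =>
      t.1.val * (j+1) + 4 + t.2.2.val ≤ r * (j+1) + 4)) =
      (Finset.univ.filter (fun a : Fin i => a.val < r)) ×ˢ Finset.univ ∪
      {(⟨r, hr⟩ : Fin i)} ×ˢ ((Finset.univ : Finset Bool) ×ˢ {(⟨0, hj⟩ : Fin j)}) := by
    ext ⟨a, b, p⟩
    simp only [Finset.mem_filter, Finset.mem_univ, true_and, Finset.mem_product, and_true,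
      Finset.mem_union, Finset.mem_singleton, Fin.ext_iff]
    rw [garith j a r p p.2 4 (by omega) (by omega)]
    simp
  rw [this, Finset.card_union_of_disjoint, Finset.card_product, glt i r hr.le]
  · simp
  · rw [Finset.disjoint_left]
    rintro ⟨a, b, p⟩ ha hb
    simp only [Finset.mem_filter, Finset.mem_univ, true_and, Finset.mem_product, and_true,
      Finset.mem_singleton, Fin.ext_iff] at ha hb
    omega

/-- In `G_{i,j}` with `i ≥ 3`, `j ≥ 5`, the number of paths (of length between 2 and `k`)
through the vertex `v = c_1`, for `k = r(j+1)+2, r(j+1)+3, r(j+1)+4` and `2 ≤ r ≤ i-1`. -/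
theorem Gij_Pvtx_c1 (i j : ℕ) (hi : 3 ≤ i) (hj : 5 ≤ j) (r : ℕ) (hr2 : 2 ≤ r)
    (hri : r ≤ i - 1) :
    Pvtx (Gij i j) (r*(j+1)+2) (Gijc i j 1 (by omega)) = r * (3*j+1) + 1 ∧
    Pvtx (Gij i j) (r*(j+1)+3) (Gijc i j 1 (by omega)) = r * (3*j+1) + 2 ∧
    Pvtx (Gij i j) (r*(j+1)+4) (Gijc i j 1 (by omega)) = r * (3*j+1) + 5 := by
  have hb : (r + 1) * (j+1) ≤ i * (j+1) := Nat.mul_le_mul_right _ (by omega)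
  have e : (r + 1) * (j+1) = r * (j+1) + (j + 1) := by ring
  refine ⟨?_, ?_, ?_⟩
  · rw [gPvtx, gcount i j _ (by omega), gbranch i j r 2 (by omega) (by omega) (by omega)]
    have : r * (3*j+1) = r * (j+1) + r * (2*j) := by ring
    omega
  · rw [gPvtx, gcount i j _ (by omega), gbranch i j r 3 (by omega) (by omega) (by omega)]
    have : r * (3*j+1) = r * (j+1) + r * (2*j) := by ring
    omega
  · rw [gPvtx, gcount i j _ (by omega), gbranch4 i j r (by omega) (by omega)]
    have : r * (3*j+1) = r * (j+1) + r * (2*j) := by ring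
    omega
end

section
/- Let i ≥ 3 and j ≥ 5. In the tree G_{i,j}, for every integer r with 2 ≤ r ≤ i−1 and every integer k with r(j+1)+4 ≤ k ≤ (r+1)j + r − 1, the number of unordered pairs of vertices at distance exactly k equals −9k + i(9j − 3) + 6j + 12r + 11. -/
open scoped Classical

open scoped Classical in
/-- `pexact G k` : the number of unordered pairs `{s,t}` of vertices at distance exactly
`k` (counted as ordered pairs and divided by two). -/
noncomputable def pexact {V : Type*} [Fintype V] (G : SimpleGraph V) (k : ℕ) : ℕ :=
  (Finset.univ.filter (fun p : V × V => G.dist p.1 p.2 = k)).card / 2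


/-- explicit distance -/
def DD (i j : ℕ) : GijVertex i j → GijVertex i j → ℕ
  | Sum.inl a, Sum.inl b => (a.val - b.val) + (b.val - a.val)
  | Sum.inl a, Sum.inr (t, _, p) =>
      (a.val - (t.val * (j+1) + 3)) + ((t.val * (j+1) + 3) - a.val) + (p.val + 1)
  | Sum.inr (t, _, p), Sum.inl a =>
      (a.val - (t.val * (j+1) + 3)) + ((t.val * (j+1) + 3) - a.val) + (p.val + 1)
  | Sum.inr (t, s, p), Sum.inr (t', s', p') =>
      if t = t' ∧ s = s' then (p.val - p'.val) + (p'.val - p.val)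
      else ((t.val * (j+1) + 3) - (t'.val * (j+1) + 3)) +
        ((t'.val * (j+1) + 3) - (t.val * (j+1) + 3)) + (p.val + p'.val + 2)

theorem DD_self (i j : ℕ) (u : GijVertex i j) : DD i j u u = 0 := by
  rcases u with a | ⟨t, s, p⟩ <;> simp [DD]

theorem DD_rel (i j : ℕ) (u v w : GijVertex i j) (h : GijRel i j v w) :
    DD i j u w ≤ DD i j u v + 1 ∧ DD i j u v ≤ DD i j u w + 1 := by
  rcases u with a | ⟨t, s, p⟩ <;> rcases v with b | ⟨t', s', p'⟩ <;>
    rcases w with c | ⟨t2, s2, p2⟩ <;> simp only [GijRel] at h <;> simp only [DD]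
  · omega
  · omega
  · obtain ⟨rfl, rfl, h⟩ := h
    omega
  · omega
  · obtain ⟨h0, h⟩ := h
    split_ifs with hc
    · obtain ⟨rfl, rfl⟩ := hc
      omega
    · omega
  · obtain ⟨rfl, rfl, h⟩ := h
    split_ifs <;> omega

theorem adj_of_rel (i j : ℕ) (v w : GijVertex i j) (h : GijRel i j v w) :
    (Gij i j).Adj v w := by
  refine (SimpleGraph.fromRel_adj _ _ _).2 ⟨?_, Or.inl h⟩
  rintro rfl
  rcases v with b | ⟨t', s', p'⟩ <;> simp [GijRel] at h

theorem DD_adj (i j : ℕ) (u v w : GijVertex i j) (h : (Gij i j).Adj v w) :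
    DD i j u w ≤ DD i j u v + 1 := by
  rcases ((SimpleGraph.fromRel_adj _ _ _).1 h).2 with h | h
  · exact (DD_rel i j u _ _ h).1
  · exact (DD_rel i j u _ _ h).2

theorem xt_lt (i j : ℕ) (t : Fin i) : t.val * (j+1) + 3 + j < i * (j+1) + 3 := by
  have := Nat.mul_le_mul_right (j+1) (Nat.succ_le_of_lt t.2)
  rw [Nat.succ_mul] at this
  omega

theorem DD_step (i j : ℕ) (u v : GijVertex i j) (h : u ≠ v) :
    ∃ w, (Gij i j).Adj v w ∧ DD i j u w + 1 = DD i j u v := by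
  rcases v with b | ⟨t', s', p'⟩
  · -- central target
    have key : ∀ x : ℕ, x < i * (j+1) + 3 → x ≠ b.val → ∃ c : Fin (i*(j+1)+3),
        (Gij i j).Adj (Sum.inl b) (Sum.inl c) ∧
        (c.val - x) + (x - c.val) + 1 = (b.val - x) + (x - b.val) := by
      intro x hx hne
      have hb := b.2
      rcases lt_or_gt_of_ne hne with hlt | hlt
      · refine ⟨⟨b.val - 1, by omega⟩, (adj_of_rel i j _ _ ?_).symm, ?_⟩
        · simp only [GijRel]; omega
        · simp only []; omega
      · refine ⟨⟨b.val + 1, by omega⟩, (adj_of_rel i j _ _ ?_), ?_⟩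
        · simp only [GijRel]
        · simp only []; omega
    rcases u with a | ⟨t, s, p⟩
    · obtain ⟨c, h1, h2⟩ := key a.val a.2 (fun e => h (by rw [Fin.ext e]))
      exact ⟨_, h1, by simp only [DD]; omega⟩
    · have hx := xt_lt i j t
      by_cases hb : t.val * (j+1) + 3 = b.val
      · have hj : 0 < j := lt_of_le_of_lt (Nat.zero_le _) p.2
        refine ⟨Sum.inr (t, s, ⟨0, hj⟩), adj_of_rel i j _ _ ?_, ?_⟩
        · exact ⟨rfl, hb.symm⟩
        · simp only [DD, and_self, if_true]; omega
      · obtain ⟨c, h1, h2⟩ := key (t.val * (j+1) + 3) (by omega) hb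
        exact ⟨_, h1, by simp only [DD]; omega⟩
  · by_cases hu : ∃ p : Fin j, u = Sum.inr (t', s', p) ∧ p'.val < p.val
    · obtain ⟨p, rfl, hp⟩ := hu
      have := p.2
      refine ⟨Sum.inr (t', s', ⟨p'.val + 1, by omega⟩), adj_of_rel i j _ _ ?_, ?_⟩
      · simp [GijRel]
      · simp only [DD, and_self, if_true]; omega
    · by_cases hp : p'.val = 0
      · have hx := xt_lt i j t'
        refine ⟨Sum.inl ⟨t'.val * (j+1) + 3, by omega⟩, (adj_of_rel i j _ _ ?_).symm, ?_⟩
        · simp [GijRel, hp]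
        · rcases u with a | ⟨t, s, p⟩
          · simp only [DD]; omega
          · simp only [DD]
            split_ifs with hc
            · obtain ⟨rfl, rfl⟩ := hc
              exfalso
              refine hu ⟨p, rfl, ?_⟩
              by_contra hq
              apply h
              have : p = p' := Fin.ext (by omega)
              rw [this]
            · omega
      · have := p'.2
        refine ⟨Sum.inr (t', s', ⟨p'.val - 1, by omega⟩), (adj_of_rel i j _ _ ?_).symm, ?_⟩
        · simp only [GijRel, true_and]; omega
        · rcases u with a | ⟨t, s, p⟩
          · simp only [DD]; omega
          · simp only [DD]
            split_ifs with hc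
            · obtain ⟨rfl, rfl⟩ := hc
              have h1 : ¬ p'.val < p.val := fun hq => hu ⟨p, rfl, hq⟩
              have h2 : p.val ≠ p'.val := fun e => h (by rw [Fin.ext e])
              omega
            · omega

theorem DD_walk (i j : ℕ) (u : GijVertex i j) : ∀ n v, DD i j u v = n →
    ∃ W : (Gij i j).Walk u v, W.length = n := by
  intro n
  induction n with
  | zero =>
    intro v hv
    by_cases h : u = v
    · subst h; exact ⟨SimpleGraph.Walk.nil, rfl⟩
    · obtain ⟨w, _, hw⟩ := DD_step i j u v h
      omega
  | succ n ih =>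
    intro v hv
    have h : u ≠ v := by
      rintro rfl
      rw [DD_self] at hv; omega
    obtain ⟨w, ha, hw⟩ := DD_step i j u v h
    obtain ⟨W, hW⟩ := ih w (by omega)
    exact ⟨W.concat ha.symm, by simp [hW]⟩

theorem DD_le_walk (i j : ℕ) (u v w : GijVertex i j) (W : (Gij i j).Walk v w) :
    DD i j u w ≤ DD i j u v + W.length := by
  induction W with
  | nil => simp
  | cons h p ih =>
    have := DD_adj i j u _ _ h
    simp only [SimpleGraph.Walk.length_cons]
    omega

theorem dist_eq_DD (i j : ℕ) (u v : GijVertex i j) : (Gij i j).dist u v = DD i j u v := by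
  obtain ⟨W, hW⟩ := DD_walk i j u _ v rfl
  apply le_antisymm
  · rw [← hW]; exact SimpleGraph.dist_le W
  · obtain ⟨W', hW'⟩ := W.reachable.exists_walk_length_eq_dist
    have := DD_le_walk i j u u v W'
    rw [DD_self] at this
    omega

theorem cnt (n lo hi : ℕ) (P : ℕ → Prop) [DecidablePred P] (hn : hi ≤ n)
    (h : ∀ x < n, (P x ↔ lo ≤ x ∧ x < hi)) :
    ∑ x ∈ Finset.range n, (if P x then 1 else 0) = hi - lo := by
  rw [← Finset.card_filter, ← Nat.card_Ico]
  congr 1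
  ext x
  simp only [Finset.mem_filter, Finset.mem_range, Finset.mem_Ico]
  constructor
  · rintro ⟨h1, h2⟩; exact (h x h1).1 h2
  · intro h1; exact ⟨by omega, (h x (by omega)).2 h1⟩

/-- number of points of `[0,n)` at distance `d` from `x`. -/
theorem cnt_dist (n x d : ℕ) (hx : x < n) (hd : 0 < d) :
    ∑ a ∈ Finset.range n, (if (a - x) + (x - a) = d then 1 else 0) =
      (if d ≤ x then 1 else 0) + (if x + d < n then 1 else 0) := by
  have h1 : ∀ a ∈ Finset.range n, (if (a - x) + (x - a) = d then 1 else 0) =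
      (if a + d = x then 1 else 0) + (if a = x + d then 1 else 0) := by
    intro a _
    split_ifs <;> omega
  rw [Finset.sum_congr rfl h1, Finset.sum_add_distrib]
  congr 1
  · split_ifs with h
    · rw [cnt n (x-d) (x-d+1) _ (by omega) (by intros; omega)]; omega
    · rw [cnt n 0 0 _ (by omega) (by intros; omega)]
  · split_ifs with h
    · rw [cnt n (x+d) (x+d+1) _ (by omega) (by intros; omega)]; omega
    · rw [cnt n 0 0 _ (by omega) (by intros; omega)]

theorem cnt_pairs (n d : ℕ) (hd : 0 < d) (hdn : d ≤ n) :
    ∑ x ∈ Finset.range n, ∑ a ∈ Finset.range n, (if (a - x) + (x - a) = d then 1 else 0) =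
      2 * (n - d) := by
  rw [Finset.sum_congr rfl (fun x hx => cnt_dist n x d (Finset.mem_range.1 hx) hd),
    Finset.sum_add_distrib, cnt n d n _ le_rfl (by intros; omega),
    cnt n 0 (n-d) _ (by omega) (by intros; omega)]
  omega

/-- a three-valued step sum. -/
theorem step_sum (a b A B C : ℕ) (f : ℕ → ℕ) (h1 : ∀ x < a, f x = A) (h2 : f a = B)
    (h3 : ∀ x, a < x → x < a + 1 + b → f x = C) :
    ∑ x ∈ Finset.range (a + 1 + b), f x = a * A + B + b * C := by
  rw [Finset.sum_range_add, Finset.sum_range_succ, h2,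
    Finset.sum_congr rfl (fun x hx => h1 x (Finset.mem_range.1 hx)),
    Finset.sum_congr rfl (fun x hx => h3 (a + 1 + x) (by omega)
      (by have := Finset.mem_range.1 hx; omega))]
  simp

theorem cb_sum (j r q e : ℕ) (hr : 2 ≤ r) (hq : 4 ≤ q) (hqj : q + 1 ≤ j) :
    ∑ t ∈ Finset.range (r + 1 + e), ∑ p ∈ Finset.range j,
      ∑ a ∈ Finset.range ((r + 1 + e) * (j+1) + 3),
        (if (a - (t * (j+1) + 3)) + ((t * (j+1) + 3) - a) + (p + 1) = r * (j+1) + q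
          then 1 else 0) =
      ((j - (q - 4)) + e * j) + ((e + 1) * j + (j - q)) := by
  have hrm : 2 * (j+1) ≤ r * (j+1) := Nat.mul_le_mul_right _ hr
  have h1 : ∀ t ∈ Finset.range (r + 1 + e), (∑ p ∈ Finset.range j,
      ∑ a ∈ Finset.range ((r + 1 + e) * (j+1) + 3),
        (if (a - (t * (j+1) + 3)) + ((t * (j+1) + 3) - a) + (p + 1) = r * (j+1) + q
          then 1 else 0)) =
      (∑ p ∈ Finset.range j, if r * (j+1) + q - (p + 1) ≤ t * (j+1) + 3 then 1 else 0) +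
      (∑ p ∈ Finset.range j, if t * (j+1) + 3 + (r * (j+1) + q - (p + 1)) <
        (r + 1 + e) * (j+1) + 3 then 1 else 0) := by
    intro t ht
    rw [← Finset.sum_add_distrib]
    refine Finset.sum_congr rfl fun p hp => ?_
    have hp := Finset.mem_range.1 hp
    have hx := xt_lt (r+1+e) j ⟨t, Finset.mem_range.1 ht⟩
    simp only [] at hx
    rw [← cnt_dist _ _ _ (by omega) (by omega)]
    refine Finset.sum_congr rfl fun a _ => ?_
    congr 1
    apply propext
    omega
  rw [Finset.sum_congr rfl h1, Finset.sum_add_distrib]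
  congr 1
  · rw [step_sum r e 0 (j - (q - 4)) j]
    · omega
    · intro t ht
      have := Nat.mul_le_mul_right (j+1) (Nat.succ_le_of_lt ht)
      rw [Nat.succ_mul] at this
      rw [cnt j 0 0 _ (by omega) (by intros; omega)]
    · rw [cnt j (q-4) j _ (by omega) (by intros; omega)]
    · intro t ht _
      have := Nat.mul_le_mul_right (j+1) (Nat.succ_le_of_lt ht)
      rw [Nat.succ_mul] at this
      rw [cnt j 0 j _ (by omega) (by intros; omega)]; omega
  · have e1 : r + 1 + e = (e + 1) + 1 + (r - 1) := by omega
    rw [e1, step_sum (e+1) (r-1) j (j - q) 0]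
    · omega
    · intro t ht
      have := Nat.mul_le_mul_right (j+1) (show t + r + 1 ≤ e + 1 + 1 + (r - 1) by omega)
      rw [Nat.add_mul, Nat.add_mul] at this
      rw [cnt j 0 j _ (by omega) (by intros; omega)]; omega
    · have : (e + 1 + 1 + (r - 1)) * (j+1) = (e + 1) * (j+1) + r * (j+1) := by
        rw [← Nat.add_mul]; congr 1; omega
      rw [cnt j q j _ (by omega) (by intros; omega)]
    · intro t ht _
      have := Nat.mul_le_mul_right (j+1) (show e + 1 + 1 + (r - 1) + 1 ≤ t + r by omega)
      rw [Nat.add_mul, Nat.add_mul t] at this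
      rw [cnt j 0 0 _ (by omega) (by intros; omega)]

theorem W_sum (j r q d : ℕ) (hr : 2 ≤ r) (hq : 4 ≤ q) (hqj : q + 1 ≤ j) :
    ∑ p ∈ Finset.range j, ∑ p' ∈ Finset.range j,
      (if d * (j+1) + (p + p' + 2) = r * (j+1) + q then 1 else 0) =
    (q - 1) * (if d = r then 1 else 0) + (j - q) * (if d = r - 1 then 1 else 0) := by
  obtain ⟨r, rfl⟩ : ∃ r', r = r' + 2 := ⟨r - 2, by omega⟩
  have e2 : (r + 2) * (j+1) = r * (j+1) + 2 * (j+1) := by ring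
  by_cases h1 : d = r + 2
  · subst h1
    rw [if_pos rfl, if_neg (by omega)]
    have : ∀ p ∈ Finset.range j, (∑ p' ∈ Finset.range j,
      (if (r+2) * (j+1) + (p + p' + 2) = (r+2) * (j+1) + q then 1 else 0)) =
        if p < q - 1 then 1 else 0 := by
      intro p hp
      split_ifs with h
      · rw [cnt j (q-2-p) (q-2-p+1) _ (by omega) (by intros; omega)]; omega
      · rw [cnt j 0 0 _ (by omega) (by intros; omega)]
    rw [Finset.sum_congr rfl this, cnt j 0 (q-1) _ (by omega) (by intros; omega)]
    omega
  rw [if_neg h1]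
  by_cases h2 : d = r + 1
  · subst h2
    rw [if_pos (by omega)]
    have e3 : (r + 1) * (j+1) = r * (j+1) + (j+1) := by ring
    have : ∀ p ∈ Finset.range j, (∑ p' ∈ Finset.range j,
      (if (r+1) * (j+1) + (p + p' + 2) = (r+2) * (j+1) + q then 1 else 0)) =
        if q ≤ p then 1 else 0 := by
      intro p hp
      have hp := Finset.mem_range.1 hp
      split_ifs with h
      · rw [cnt j (j+1+q-2-p) (j+1+q-2-p+1) _ (by omega) (by intros; omega)]; omega
      · rw [cnt j 0 0 _ (by omega) (by intros; omega)]
    rw [Finset.sum_congr rfl this, cnt j q j _ (by omega) (by intros; omega)]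
    omega
  rw [if_neg (by omega)]
  simp only [mul_zero, add_zero]
  refine Finset.sum_eq_zero fun p hp => Finset.sum_eq_zero fun p' hp' => ?_
  have hp := Finset.mem_range.1 hp
  have hp' := Finset.mem_range.1 hp'
  apply if_neg
  rcases lt_or_ge d (r+1) with h3 | h3
  · have := Nat.mul_le_mul_right (j+1) (show d ≤ r by omega)
    omega
  · have := Nat.mul_le_mul_right (j+1) (show r + 3 ≤ d by omega)
    have e4 : (r + 3) * (j+1) = r * (j+1) + 3 * (j+1) := by ring
    omega

theorem bb_sum (j r q i : ℕ) (hr : 2 ≤ r) (hq : 4 ≤ q) (hqj : q + 1 ≤ j) (hi : r + 1 ≤ i) :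
    ∑ t ∈ Finset.range i, ∑ t' ∈ Finset.range i, ∑ p ∈ Finset.range j, ∑ p' ∈ Finset.range j,
      (if ((t' - t) + (t - t')) * (j+1) + (p + p' + 2) = r * (j+1) + q then 1 else 0) =
    (q - 1) * (2 * (i - r)) + (j - q) * (2 * (i - (r - 1))) := by
  simp_rw [W_sum j r q _ hr hq hqj, Finset.sum_add_distrib, ← Finset.mul_sum]
  rw [cnt_pairs i r (by omega) (by omega), cnt_pairs i (r-1) (by omega) (by omega)]

theorem total (i j r q : ℕ) (hr : 2 ≤ r) (hq : 4 ≤ q) (hqj : q + 1 ≤ j) :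
    ∑ u : GijVertex i j, ∑ v : GijVertex i j,
      (if DD i j u v = r * (j+1) + q then 1 else 0) =
    (∑ x ∈ Finset.range (i*(j+1)+3), ∑ a ∈ Finset.range (i*(j+1)+3),
      (if (a - x) + (x - a) = r * (j+1) + q then 1 else 0)) +
    4 * (∑ t ∈ Finset.range i, ∑ p ∈ Finset.range j,
      ∑ a ∈ Finset.range (i * (j+1) + 3),
        (if (a - (t * (j+1) + 3)) + ((t * (j+1) + 3) - a) + (p + 1) = r * (j+1) + q
          then 1 else 0)) +
    4 * (∑ t ∈ Finset.range i, ∑ t' ∈ Finset.range i, ∑ p ∈ Finset.range j,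
      ∑ p' ∈ Finset.range j,
      (if ((t' - t) + (t - t')) * (j+1) + (p + p' + 2) = r * (j+1) + q then 1 else 0)) := by
  have hrm : 2 * (j+1) ≤ r * (j+1) := Nat.mul_le_mul_right _ hr
  have hbb : ∀ (t t' : Fin i) (s s' : Bool) (p p' : Fin j),
      (if DD i j (Sum.inr (t, s, p)) (Sum.inr (t', s', p')) = r * (j+1) + q then 1 else 0) =
      (if ((t'.val - t.val) + (t.val - t'.val)) * (j+1) + (p.val + p'.val + 2) =
        r * (j+1) + q then 1 else 0) := by
    intro t t' s s' p p'
    have hp := p.2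
    have hp' := p'.2
    congr 1
    apply propext
    simp only [DD]
    split_ifs with hc
    · obtain ⟨rfl, rfl⟩ := hc
      simp only [Nat.sub_self, Nat.zero_add, Nat.zero_mul]
      omega
    · rw [Nat.add_mul, Nat.sub_mul, Nat.sub_mul]
      omega
  have hcc : ∀ (x a : Fin (i*(j+1)+3)),
      (if DD i j (Sum.inl x) (Sum.inl a) = r * (j+1) + q then 1 else 0) =
      (if (x.val - a.val) + (a.val - x.val) = r * (j+1) + q then 1 else 0) :=
    fun _ _ => rfl
  have hcb : ∀ (a : Fin (i*(j+1)+3)) (t : Fin i) (s : Bool) (p : Fin j),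
      (if DD i j (Sum.inl a) (Sum.inr (t, s, p)) = r * (j+1) + q then 1 else 0) =
      (if (a.val - (t.val * (j+1) + 3)) + ((t.val * (j+1) + 3) - a.val) + (p.val + 1) =
        r * (j+1) + q then 1 else 0) :=
    fun _ _ _ _ => rfl
  have hbc : ∀ (a : Fin (i*(j+1)+3)) (t : Fin i) (s : Bool) (p : Fin j),
      (if DD i j (Sum.inr (t, s, p)) (Sum.inl a) = r * (j+1) + q then 1 else 0) =
      (if (a.val - (t.val * (j+1) + 3)) + ((t.val * (j+1) + 3) - a.val) + (p.val + 1) =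
        r * (j+1) + q then 1 else 0) :=
    fun _ _ _ _ => rfl
  simp only [Finset.sum_range]
  simp only [Fintype.sum_sum_type, Fintype.sum_prod_type, Fintype.sum_bool, hbb,
    hcc, hcb, hbc, Finset.sum_add_distrib]
  have c1 : ∀ f : Fin (i*(j+1)+3) → Fin i → Fin j → ℕ,
      ∑ a, ∑ t, ∑ p, f a t p = ∑ t, ∑ p, ∑ a, f a t p := by
    intro f
    rw [Finset.sum_comm]
    exact Finset.sum_congr rfl fun t _ => Finset.sum_comm
  have c2 : ∀ f : Fin i → Fin j → Fin i → Fin j → ℕ,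
      ∑ t, ∑ p, ∑ t', ∑ p', f t p t' p' = ∑ t, ∑ t', ∑ p, ∑ p', f t p t' p' := by
    intro f
    exact Finset.sum_congr rfl fun t _ => Finset.sum_comm
  rw [c1, c2]
  have c3 : (∑ x : Fin (i*(j+1)+3), ∑ a : Fin (i*(j+1)+3),
      (if (x.val - a.val) + (a.val - x.val) = r * (j+1) + q then 1 else 0)) =
      ∑ x : Fin (i*(j+1)+3), ∑ a : Fin (i*(j+1)+3),
      (if (a.val - x.val) + (x.val - a.val) = r * (j+1) + q then 1 else 0) :=
    Finset.sum_comm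
  rw [c3]
  ring

theorem pexact_eq (i j k : ℕ) : pexact (Gij i j) k =
    (∑ u : GijVertex i j, ∑ v : GijVertex i j, (if DD i j u v = k then 1 else 0)) / 2 := by
  unfold pexact
  rw [Finset.card_filter, Fintype.sum_prod_type]
  simp only [dist_eq_DD]

/-- In `G_{i,j}` with `i ≥ 3`, `j ≥ 5`, for `2 ≤ r ≤ i-1` and
`r(j+1)+4 ≤ k ≤ (r+1)j + r - 1`, the number of unordered pairs of vertices at distance
exactly `k` equals `-9k + i(9j-3) + 6j + 12r + 11`. -/
theorem Gij_pexact (i j r k : ℕ) (hi : 3 ≤ i) (hj : 5 ≤ j) (hr2 : 2 ≤ r)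
    (hri : r ≤ i - 1) (hk1 : r*(j+1)+4 ≤ k) (hk2 : k ≤ (r+1)*j + r - 1) :
    (pexact (Gij i j) k : ℤ) =
      -9 * (k : ℤ) + (i : ℤ) * (9*(j : ℤ) - 3) + 6*(j : ℤ) + 12*(r : ℤ) + 11 := by
  obtain ⟨e, rfl⟩ : ∃ e, i = r + 1 + e := ⟨i - (r + 1), by omega⟩
  have hm : (r+1)*j + r = r*(j+1) + j := by ring
  obtain ⟨q, rfl⟩ : ∃ q, k = r*(j+1) + q := ⟨k - r*(j+1), by omega⟩
  have hq : 4 ≤ q := by omega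
  have hqj : q + 1 ≤ j := by omega
  have hL : (r + 1 + e) * (j+1) = r * (j+1) + (1 + e) * (j+1) := by ring
  have hL2 : j + 1 ≤ (1 + e) * (j+1) := Nat.le_mul_of_pos_left _ (by omega)
  rw [pexact_eq, total _ j r q hr2 hq hqj, cb_sum j r q e hr2 hq hqj,
    bb_sum j r q _ hr2 hq hqj (by omega), cnt_pairs _ _ (by omega) (by omega)]
  obtain ⟨q, rfl⟩ : ∃ q', q = q' + 4 := ⟨q - 4, by omega⟩
  obtain ⟨j, rfl⟩ : ∃ j', j = j' + (q + 4) := ⟨j - (q + 4), by omega⟩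
  have a1 : (r + 1 + e) * (j + (q + 4) + 1) + 3 - (r * (j + (q + 4) + 1) + (q + 4)) =
      e * (j + (q + 4) + 1) + j + 4 := by
    rw [Nat.sub_eq_iff_eq_add (by omega)]; ring
  have a2 : j + (q + 4) - (q + 4 - 4) = j + 4 := by omega
  have a3 : j + (q + 4) - (q + 4) = j := by omega
  have a4 : r + 1 + e - r = e + 1 := by omega
  have a5 : r + 1 + e - (r - 1) = e + 2 := by omega
  have a6 : q + 4 - 1 = q + 3 := by omega
  rw [a1, a2, a3, a4, a5, a6]
  rw [show ∀ A B C D : ℕ, 2 * A + 4 * B + 4 * (C * (2 * (e + 1)) + D * (2 * (e + 2))) =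
    2 * (A + 2 * B + 4 * (C * (e + 1) + D * (e + 2))) by intros; ring,
    Nat.mul_div_cancel_left _ (by norm_num)]
  push_cast
  ring
end

section
/- If a finite real sequence b = (b_1, …, b_N) has q pairwise disjoint intervals each of which is a dip, then every monotone real sequence c = (c_1, …, c_N) of the same length differs from b in at least q positions; that is, #{ m : b_m ≠ c_m } ≥ q. -/
open scoped Classical

/-- The segment of `b` on the index interval `[l, r]` is monotonically non-increasing. -/
def NonIncOn {N : ℕ} (b : Fin N → ℝ) (l r : Fin N) : Prop :=
  ∀ m m' : Fin N, l ≤ m → m ≤ m' → m' ≤ r → b m' ≤ b m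

/-- The segment of `b` on the index interval `[l, r]` is monotonically non-decreasing. -/
def NonDecOn {N : ℕ} (b : Fin N → ℝ) (l r : Fin N) : Prop :=
  ∀ m m' : Fin N, l ≤ m → m ≤ m' → m' ≤ r → b m ≤ b m'

/-- The interval `[l, r]` of the sequence `b` is a dip: it can be partitioned into a
monotonically non-increasing part followed by a monotonically non-decreasing part, but
the entire interval is neither monotonically non-increasing nor non-decreasing. -/
def IsDip {N : ℕ} (b : Fin N → ℝ) (l r : Fin N) : Prop :=
  l ≤ r ∧
  (∃ m : Fin N, l ≤ m ∧ m ≤ r ∧ NonIncOn b l m ∧ NonDecOn b m r) ∧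
  ¬ NonIncOn b l r ∧ ¬ NonDecOn b l r

/-- If a finite real sequence `b` has `q` pairwise disjoint intervals each of which is a
dip, then every monotone sequence `c` of the same length differs from `b` in at least `q`
positions. -/
theorem dips_force_changes (N q : ℕ) (b c : Fin N → ℝ) (lo hi : Fin q → Fin N)
    (hdip : ∀ t, IsDip b (lo t) (hi t))
    (hdisj : ∀ t t', t ≠ t' → hi t < lo t' ∨ hi t' < lo t)
    (hmono : Monotone c ∨ Antitone c) :
    q ≤ (Finset.univ.filter (fun m : Fin N => b m ≠ c m)).card := by
  have key : ∀ t, ∃ m, lo t ≤ m ∧ m ≤ hi t ∧ b m ≠ c m := by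
    intro t
    by_contra! h
    obtain ⟨_, _, h1, h2⟩ := hdip t
    rcases hmono with hc | hc
    · apply h2
      intro m m' hl hm hr
      rw [h m hl (hm.trans hr), h m' (hl.trans hm) hr]
      exact hc hm
    · apply h1
      intro m m' hl hm hr
      rw [h m hl (hm.trans hr), h m' (hl.trans hm) hr]
      exact hc hm
  choose f hf1 hf2 hf3 using key
  have hinj : Function.Injective f := by
    intro t t' h
    by_contra hne
    have h1 := hf1 t
    have h2 := hf2 t
    rw [h] at h1 h2
    rcases hdisj t t' hne with h3 | h3
    · exact absurd (h3.trans_le ((hf1 t').trans h2)) (lt_irrefl _)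
    · exact absurd (h3.trans_le (h1.trans (hf2 t'))) (lt_irrefl _)
  have := Finset.card_le_card_of_injOn (s := (Finset.univ : Finset (Fin q)))
    (t := Finset.univ.filter (fun m : Fin N => b m ≠ c m)) f
    (fun t _ => by simpa using hf3 t) hinj.injOn
  simpa using this
end
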